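/- Every finite group occurs as a Galois group over ℚ̄(t), where ℚ̄ is the algebraic closure of ℚ; that is, for every finite group G there exists a finite Galois extension N of the field ℚ̄(t) of rational functions in one indeterminate over ℚ̄ with Gal(N/ℚ̄(t)) isomorphic to G. -/

import Mathlib

open Polynomial

namespace IGP

section P1
variable {k : Type} [Field k]

/-- uniformizer `t - c` -/
noncomputable def uu (c : k) : RatFunc k := algebraMap k[X] (RatFunc k) (X - C c)

/-- The local ring at `c`. -/
noncomputable def O (c : k) : Subring (RatFunc k) where
  carrier := {f | f.denom.eval c ≠ 0}
  mul_mem' := by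
    intro f g hf hg h
    have := eval_dvd (RatFunc.denom_mul_dvd f g) (x := c)
    simp only [h, zero_dvd_iff, eval_mul, mul_eq_zero] at this
    exact this.elim hf hg
  one_mem' := by simp
  add_mem' := by
    intro f g hf hg h
    have := eval_dvd (RatFunc.denom_add_dvd f g) (x := c)
    simp only [h, zero_dvd_iff, eval_mul, mul_eq_zero] at this
    exact this.elim hf hg
  zero_mem' := by simp
  neg_mem' := by
    intro f hf h
    have h1 := RatFunc.denom_mul_dvd (-1 : RatFunc k) f
    have h2 : RatFunc.denom (-1 : RatFunc k) = 1 := by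
      have := RatFunc.denom_algebraMap (K := k) (-1)
      simpa using this
    rw [h2, one_mul, neg_one_mul] at h1
    have := eval_dvd h1 (x := c)
    rw [h, zero_dvd_iff] at this
    exact hf this

theorem mem_O {c : k} {f : RatFunc k} : f ∈ O c ↔ f.denom.eval c ≠ 0 := Iff.rfl

theorem mem_O_of_eq {c : k} {f : RatFunc k} (p q : k[X]) (hq : q.eval c ≠ 0)
    (h : f * algebraMap k[X] (RatFunc k) q = algebraMap k[X] (RatFunc k) p) : f ∈ O c := by
  intro h0
  have hq0 : q ≠ 0 := by rintro rfl; simp at hq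
  have hq1 : algebraMap k[X] (RatFunc k) q ≠ 0 := by simpa using hq0
  have : f = algebraMap _ _ p / algebraMap _ _ q := by rw [eq_div_iff hq1, h]
  have h1 : f.denom ∣ q := (RatFunc.denom_dvd hq0).2 ⟨p, this⟩
  have := eval_dvd h1 (x := c)
  rw [h0, zero_dvd_iff] at this
  exact hq this

theorem poly_mem_O (c : k) (p : k[X]) : algebraMap k[X] (RatFunc k) p ∈ O c := by
  simp [mem_O]

/-- evaluation at `c` -/
noncomputable def ev (c : k) : O c →+* k where
  toFun f := RatFunc.eval (RingHom.id k) c f.1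
  map_one' := by simp
  map_zero' := by simp
  map_mul' f g := RatFunc.eval_mul (f := RingHom.id k) (a := c) f.2 g.2
  map_add' f g := RatFunc.eval_add (f := RingHom.id k) (a := c) f.2 g.2

/-- polynomials in the local ring -/
noncomputable def polyO (c : k) : k[X] →+* O c :=
  (algebraMap k[X] (RatFunc k)).codRestrict (O c) (poly_mem_O c)

@[simp] theorem coe_polyO (c : k) (p : k[X]) :
    (polyO c p : RatFunc k) = algebraMap k[X] (RatFunc k) p := rfl

@[simp] theorem ev_polyO (c : k) (p : k[X]) : ev c (polyO c p) = p.eval c := by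
  change RatFunc.eval (RingHom.id k) c (algebraMap k[X] (RatFunc k) p) = _
  rw [RatFunc.eval_algebraMap]; simp

theorem inv_mem_O {c : k} (f : O c) (h : ev c f ≠ 0) : (f : RatFunc k)⁻¹ ∈ O c := by
  have hf : (f : RatFunc k) ≠ 0 := by
    intro h0
    apply h
    have : f = 0 := Subtype.ext h0
    rw [this, map_zero]
  have hn : f.1.num.eval c ≠ 0 := by
    intro h0
    apply h
    change RatFunc.eval (RingHom.id k) c f.1 = 0
    simp [RatFunc.eval, eval₂_id, h0]
  refine mem_O_of_eq f.1.denom f.1.num hn ?_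
  rw [inv_mul_eq_iff_eq_mul₀ hf]
  have h1 := RatFunc.num_div_denom f.1
  have : algebraMap k[X] (RatFunc k) f.1.denom ≠ 0 := by simp [RatFunc.denom_ne_zero]
  rw [div_eq_iff this] at h1
  rw [h1]

theorem uu_ne_zero (c : k) : uu c ≠ 0 := by
  rw [uu]
  simpa [-map_sub] using X_sub_C_ne_zero c

theorem uu_mem (b c : k) : uu b ∈ O c := poly_mem_O _ _

/-- uniformizer as an element of the local ring -/
noncomputable def uO (b c : k) : O c := ⟨uu b, uu_mem b c⟩

theorem uO_eq (b c : k) : uO b c = polyO c (X - C b) := rfl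

@[simp] theorem ev_uO (b c : k) : ev c (uO b c) = c - b := by simp [uO_eq]

theorem uu_inv_mem {b c : k} (h : b ≠ c) : (uu b)⁻¹ ∈ O c :=
  inv_mem_O (uO b c) (by simp [sub_ne_zero, h.symm])

theorem exists_eq_uO_mul {c : k} (f : O c) (h : ev c f = 0) : ∃ g : O c, f = uO c c * g := by
  have hn : f.1.num.eval c = 0 := by
    have : RatFunc.eval (RingHom.id k) c f.1 = 0 := h
    simp only [RatFunc.eval, eval₂_id, div_eq_zero_iff] at this
    exact this.resolve_right f.2
  obtain ⟨q, hq⟩ := dvd_iff_isRoot.2 hn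
  have hd : algebraMap k[X] (RatFunc k) f.1.denom ≠ 0 := by simp [RatFunc.denom_ne_zero]
  refine ⟨⟨algebraMap k[X] (RatFunc k) q / algebraMap k[X] (RatFunc k) f.1.denom,
    mem_O_of_eq q f.1.denom f.2 (by field_simp)⟩, Subtype.ext ?_⟩
  change f.1 = uu c * _
  have h1 := RatFunc.num_div_denom f.1
  conv_lhs => rw [← h1, hq]
  simp only [uu, map_mul]
  rw [mul_div_assoc]

theorem exists_eq_ev_add {c : k} (f : O c) : ∃ g : O c, f = polyO c (C (ev c f)) + uO c c * g := by
  obtain ⟨g, hg⟩ := exists_eq_uO_mul (f - polyO c (C (ev c f))) (by simp)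
  exact ⟨g, by rw [← hg]; ring⟩

theorem exists_pow_mul_mem (c : k) (f : RatFunc k) : ∃ m : ℕ, uu c ^ m * f ∈ O c := by
  obtain ⟨q, hq, hr⟩ := exists_eq_pow_rootMultiplicity_mul_and_not_dvd f.denom
    (RatFunc.denom_ne_zero f) c
  refine ⟨f.denom.rootMultiplicity c, mem_O_of_eq f.num q ?_ ?_⟩
  · intro h; exact hr (dvd_iff_isRoot.2 h)
  · have h1 := RatFunc.num_div_denom f
    have hd : algebraMap k[X] (RatFunc k) f.denom ≠ 0 := by simp [RatFunc.denom_ne_zero]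
    have h2 : algebraMap k[X] (RatFunc k) f.denom = uu c ^ (f.denom.rootMultiplicity c) *
      algebraMap k[X] (RatFunc k) q := by
      conv_lhs => rw [hq]
      simp [uu]
    rw [div_eq_iff hd, h2] at h1
    rw [h1]; ring

theorem exists_poly_of_forall_mem [IsAlgClosed k] (f : RatFunc k) (h : ∀ c, f ∈ O c) :
    ∃ p : k[X], f = algebraMap _ _ p := by
  have h1 : f.denom.degree = 0 := by
    by_contra h0
    obtain ⟨c, hc⟩ := IsAlgClosed.exists_root f.denom h0
    exact h c hc
  have h2 : f.denom = 1 := by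
    have h3 := eq_C_of_degree_eq_zero h1
    have h4 := RatFunc.monic_denom f
    exact h4.natDegree_eq_zero.1 (natDegree_eq_of_degree_eq_some h1)
  refine ⟨f.num, ?_⟩
  conv_lhs => rw [← RatFunc.num_div_denom f, h2]
  simp

/-- The local ring at infinity. -/
noncomputable def Oinf (k : Type) [Field k] : Subring (RatFunc k) where
  carrier := {f | f.intDegree ≤ 0}
  mul_mem' := by
    intro f g hf hg
    by_cases h1 : f = 0
    · simp [h1]
    by_cases h2 : g = 0
    · simp [h2]
    simp only [Set.mem_ofPred_eq] at *
    rw [RatFunc.intDegree_mul h1 h2]; omega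
  one_mem' := by simp
  add_mem' := by
    intro f g hf hg
    by_cases h2 : g = 0
    · simpa [h2] using hf
    by_cases h1 : f + g = 0
    · simp [h1]
    simp only [Set.mem_ofPred_eq] at *
    exact (RatFunc.intDegree_add_le h2 h1).trans (by simp [hf, hg])
  zero_mem' := by simp
  neg_mem' := by
    intro f hf
    simpa using hf

theorem mem_Oinf {f : RatFunc k} : f ∈ Oinf k ↔ f.intDegree ≤ 0 := Iff.rfl

theorem uu_intDegree (c : k) : (uu c).intDegree = 1 := by
  rw [uu, RatFunc.intDegree_polynomial]; simp

theorem uu_inv_mem_Oinf (c : k) : (uu c)⁻¹ ∈ Oinf k := by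
  rw [mem_Oinf, RatFunc.intDegree_inv, uu_intDegree]; norm_num

theorem C_mem_Oinf (c : k) : RatFunc.C c ∈ Oinf k := by
  rw [mem_Oinf]; simp

theorem X_inv_mem_Oinf : (RatFunc.X : RatFunc k)⁻¹ ∈ Oinf k := by
  rw [mem_Oinf, RatFunc.intDegree_inv]; simp

theorem uu_div_X_mem_Oinf (c : k) : RatFunc.X⁻¹ * uu c ∈ Oinf k := by
  rw [mem_Oinf, RatFunc.intDegree_mul (by simp [RatFunc.X_ne_zero]) (uu_ne_zero c), RatFunc.intDegree_inv, uu_intDegree]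
  simp

theorem natDegree_le_of_mem_Oinf (p : k[X]) (m : ℕ)
    (h : RatFunc.X⁻¹ ^ m * algebraMap k[X] (RatFunc k) p ∈ Oinf k) : p.natDegree ≤ m := by
  by_cases hp : p = 0
  · simp [hp]
  have hX : (RatFunc.X : RatFunc k) ≠ 0 := RatFunc.X_ne_zero
  have : ∀ m : ℕ, ((RatFunc.X : RatFunc k)⁻¹ ^ m).intDegree = - m := by
    intro m
    induction m with
    | zero => simp
    | succ m ih =>
      rw [pow_succ, RatFunc.intDegree_mul (by simp [hX]) (by simp [hX]), ih, RatFunc.intDegree_inv]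
      simp; ring
  rw [mem_Oinf, RatFunc.intDegree_mul (by simp [hX]) (by simpa using hp), this,
    RatFunc.intDegree_polynomial] at h
  omega

theorem exists_pp (a : k) (f : RatFunc k) : ∃ p : RatFunc k, f - p ∈ O a ∧
    (∀ c, c ≠ a → p ∈ O c) ∧ p ∈ Oinf k := by
  obtain ⟨m, hm⟩ := exists_pow_mul_mem a f
  induction m generalizing f with
  | zero => exact ⟨0, by simpa using hm, fun c _ => zero_mem _, zero_mem _⟩
  | succ m ih =>
    obtain ⟨g, hg⟩ := exists_eq_ev_add (⟨_, hm⟩ : O a)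
    set e := ev a (⟨_, hm⟩ : O a)
    have hu := uu_ne_zero a
    have hg' : uu a ^ (m + 1) * f = RatFunc.C e + uu a * g.1 := by
      have := congrArg Subtype.val hg
      simpa [uO] using this
    have h2 : uu a ^ m * (f - RatFunc.C e * (uu a)⁻¹ ^ (m + 1)) ∈ O a := by
      have : uu a ^ m * (f - RatFunc.C e * (uu a)⁻¹ ^ (m + 1)) = g.1 := by
        have h3 : uu a * (uu a ^ m * (f - RatFunc.C e * (uu a)⁻¹ ^ (m + 1))) = uu a * g.1 := by
          have h4 : uu a ^ (m + 1) * (uu a)⁻¹ ^ (m + 1) = 1 := by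
            rw [← mul_pow, mul_inv_cancel₀ hu, one_pow]
          linear_combination hg' - RatFunc.C e * h4
        exact mul_left_cancel₀ hu h3
      rw [this]; exact g.2
    obtain ⟨p, h3, h4, h5⟩ := ih _ h2
    refine ⟨p + RatFunc.C e * (uu a)⁻¹ ^ (m + 1), ?_, ?_, ?_⟩
    · convert h3 using 1; ring
    · intro c hc
      refine add_mem (h4 c hc) (mul_mem ?_ (pow_mem (uu_inv_mem hc.symm) _))
      rw [← RatFunc.algebraMap_C]; exact poly_mem_O _ _
    · exact add_mem h5 (mul_mem (C_mem_Oinf e) (pow_mem (uu_inv_mem_Oinf a) _))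

theorem exists_scale {ι : Type} [Finite ι] (c : k) (f : ι → RatFunc k) (hf : f ≠ 0) :
    ∃ (e : RatFunc k) (g : ι → O c), e ≠ 0 ∧ (∀ i, e * f i = g i) ∧ ∃ i, ev c (g i) ≠ 0 := by
  classical
  have := Fintype.ofFinite ι
  -- bound on divisibility
  obtain ⟨i0, hi0⟩ := Function.ne_iff.1 hf
  have hi0' : f i0 ≠ 0 := hi0
  choose m hm using fun i => exists_pow_mul_mem c (f i)
  have hbig : ∀ i, uu c ^ (∑ i, m i) * f i ∈ O c := by
    intro i
    obtain ⟨s, hs⟩ := Nat.exists_eq_add_of_le (Finset.single_le_sum (f := m) (fun _ _ => Nat.zero_le _)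
      (Finset.mem_univ i))
    rw [hs, add_comm, pow_add, mul_assoc]
    exact mul_mem (pow_mem (uu_mem _ _) _) (hm i)
  obtain ⟨M, hM⟩ := exists_pow_mul_mem c (f i0)⁻¹
  have hu := uu_ne_zero c
  -- by contradiction: infinitely divisible
  by_contra hcon
  push Not at hcon
  have key : ∀ j : ℕ, ∀ i, uu c ^ (∑ i, m i) * (uu c)⁻¹ ^ j * f i ∈ O c := by
    intro j
    induction j with
    | zero => simpa using hbig
    | succ j ih =>
      intro i
      have h1 := hcon (uu c ^ (∑ i, m i) * (uu c)⁻¹ ^ j) (fun i => ⟨_, ih i⟩) (by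
        simp [hu]) (fun i => rfl) i
      obtain ⟨g, hg⟩ := exists_eq_uO_mul _ h1
      have hg' := congrArg Subtype.val hg
      have : uu c ^ (∑ i, m i) * (uu c)⁻¹ ^ (j + 1) * f i = g.1 := by
        have h3 : uu c ^ (∑ i, m i) * (uu c)⁻¹ ^ j * f i = uu c * g.1 := hg'
        have h5 : uu c * (uu c)⁻¹ = 1 := mul_inv_cancel₀ hu
        linear_combination (uu c)⁻¹ * h3 + g.1 * h5
      rw [this]; exact g.2
  have h1 := key (∑ i, m i + M + 1) i0
  have h2 := mul_mem h1 hM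
  have h3 : uu c ^ (∑ i, m i) * (uu c)⁻¹ ^ (∑ i, m i + M + 1) * f i0 * (uu c ^ M * (f i0)⁻¹)
      = (uu c)⁻¹ := by
    rw [pow_add, pow_add]
    have e1 : uu c ^ (∑ i, m i) * (uu c)⁻¹ ^ (∑ i, m i) = 1 := by
      rw [← mul_pow, mul_inv_cancel₀ hu, one_pow]
    have e2 : uu c ^ M * (uu c)⁻¹ ^ M = 1 := by
      rw [← mul_pow, mul_inv_cancel₀ hu, one_pow]
    have e3 : f i0 * (f i0)⁻¹ = 1 := mul_inv_cancel₀ hi0'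
    linear_combination (uu c)⁻¹ * (uu c ^ M * (uu c)⁻¹ ^ M) * (f i0 * (f i0)⁻¹) * e1 + (uu c)⁻¹ * (f i0 * (f i0)⁻¹) * e2 + (uu c)⁻¹ * e3
  rw [h3] at h2
  have h4 : uO c c * ⟨_, h2⟩ = 1 := Subtype.ext (mul_inv_cancel₀ hu)
  have h5 := congrArg (ev c) h4
  simp at h5

end P1
end IGP

open Polynomial

namespace IGP

section P2
variable {G : Type} [Group G] [Fintype G] [DecidableEq G]

/-- structure constants of a commutative algebra with a normal basis -/
structure SC (G R : Type) [Group G] [Fintype G] [DecidableEq G] [CommRing R] where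
  γ : G → G → G → R
  d : G → R
  comm : ∀ h h' l, γ h h' l = γ h' h l
  assoc : ∀ h h' h'' m, ∑ l, γ h h' l * γ l h'' m = ∑ l, γ h' h'' l * γ h l m
  one : ∀ h' l, ∑ h, d h * γ h h' l = if h' = l then 1 else 0
  equiv : ∀ s h h' l, γ (s * h) (s * h') (s * l) = γ h h' l

def SC.F {R : Type} [CommRing R] (_ : SC G R) : Type := G → R

namespace SC
variable {R R' : Type} [CommRing R] [CommRing R'] (S : SC G R) (S' : SC G R')

noncomputable instance : AddCommGroup S.F := inferInstanceAs (AddCommGroup (G → R))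
noncomputable instance : Module R S.F := inferInstanceAs (Module R (G → R))

/-- vectors to elements -/
def ofV (v : G → R) : S.F := v
variable {S} in
/-- elements to vectors -/
def toV (f : S.F) : G → R := f
theorem ofV_app (v : G → R) (l : G) : ofV S v l = v l := rfl
variable {S} in
theorem toV_ofV (v : G → R) : toV (ofV S v) = v := rfl
variable {S} in
theorem toV_app (f : S.F) (l : G) : toV f l = f l := rfl
variable {S} in
theorem toV_inj {f g : S.F} (h : toV f = toV g) : f = g := h
variable {S} in
theorem add_app (f g : S.F) (l : G) : (f + g) l = f l + g l := rfl
variable {S} in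
theorem zero_app (l : G) : (0 : S.F) l = 0 := rfl
variable {S} in
theorem smul_app (r : R) (f : S.F) (l : G) : (r • f) l = r * f l := rfl
variable {S} in
theorem sum_app {ι : Type} (s : Finset ι) (f : ι → S.F) (l : G) :
    (∑ i ∈ s, f i) l = ∑ i ∈ s, f i l := Finset.sum_apply (M := fun _ : G => R) l s f

variable {S} in
@[ext] theorem F_ext {f g : S.F} (h : ∀ l, f l = g l) : f = g := funext h

noncomputable instance : Mul S.F := ⟨fun f f' l => ∑ h, ∑ h', f h * f' h' * S.γ h h' l⟩
noncomputable instance : One S.F := ⟨S.d⟩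

variable {S} in
theorem mul_app (f f' : S.F) (l : G) : (f * f') l = ∑ h, ∑ h', f h * f' h' * S.γ h h' l := rfl
theorem one_app (l : G) : (1 : S.F) l = S.d l := rfl

variable {S} in
theorem mul_comm' (f f' : S.F) : f * f' = f' * f := by
  ext l
  rw [mul_app, mul_app, Finset.sum_comm]
  refine Finset.sum_congr rfl fun h _ => Finset.sum_congr rfl fun h' _ => ?_
  rw [S.comm]; ring

variable {S} in
theorem mul_assoc' (f f' f'' : S.F) : f * f' * f'' = f * (f' * f'') := by
  ext m
  have h1 : (f * f' * f'') m = ∑ h, ∑ h', ∑ h'', f h * f' h' * f'' h'' * ∑ l, S.γ h h' l * S.γ l h'' m := by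
    simp only [mul_app, Finset.sum_mul, Finset.mul_sum]
    rw [Finset.sum_congr rfl (fun l _ => Finset.sum_comm)]
    rw [Finset.sum_comm]
    refine Finset.sum_congr rfl fun h _ => ?_
    rw [Finset.sum_congr rfl (fun l _ => Finset.sum_comm)]
    rw [Finset.sum_comm]
    refine Finset.sum_congr rfl fun h' _ => ?_
    rw [Finset.sum_comm]
    refine Finset.sum_congr rfl fun h'' _ => Finset.sum_congr rfl fun l _ => ?_
    ring
  have h2 : (f * (f' * f'')) m = ∑ h, ∑ h', ∑ h'', f h * f' h' * f'' h'' * ∑ l, S.γ h' h'' l * S.γ h l m := by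
    simp only [mul_app, Finset.sum_mul, Finset.mul_sum]
    refine Finset.sum_congr rfl fun h _ => ?_
    rw [Finset.sum_comm]
    refine Finset.sum_congr rfl fun h' _ => ?_
    rw [Finset.sum_comm]
    refine Finset.sum_congr rfl fun h'' _ => Finset.sum_congr rfl fun l _ => ?_
    ring
  rw [h1, h2]
  simp only [S.assoc]

variable {S} in
theorem one_mul' (f : S.F) : 1 * f = f := by
  ext l
  rw [mul_app, Finset.sum_comm]
  have : ∀ h', ∑ h, (1 : S.F) h * f h' * S.γ h h' l = f h' * if h' = l then 1 else 0 := by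
    intro h'
    rw [← S.one, Finset.mul_sum]
    exact Finset.sum_congr rfl fun h _ => by rw [one_app]; ring
  rw [Finset.sum_congr rfl (fun h' _ => this h')]
  rw [Finset.sum_eq_single l (fun b _ hb => by simp [hb]) (by simp)]
  simp

noncomputable instance : CommRing S.F :=
  { (inferInstance : AddCommGroup S.F), (inferInstance : Mul S.F), (inferInstance : One S.F) with
    left_distrib := by
      intro f g h; ext l
      simp only [mul_app, add_app, ← Finset.sum_add_distrib]
      exact Finset.sum_congr rfl fun _ _ => Finset.sum_congr rfl fun _ _ => by ring
    right_distrib := by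
      intro f g h; ext l
      simp only [mul_app, add_app, ← Finset.sum_add_distrib]
      exact Finset.sum_congr rfl fun _ _ => Finset.sum_congr rfl fun _ _ => by ring
    zero_mul := by intro f; ext l; simp [mul_app, zero_app]
    mul_zero := by intro f; ext l; simp [mul_app, zero_app]
    mul_assoc := mul_assoc'
    mul_comm := mul_comm'
    one_mul := one_mul'
    mul_one := fun f => by rw [mul_comm', one_mul'] }

noncomputable instance : Algebra R S.F := Algebra.ofModule
  (by
    intro r f g; ext l
    simp only [smul_app, mul_app, Finset.mul_sum]
    exact Finset.sum_congr rfl fun _ _ => Finset.sum_congr rfl fun _ _ => by ring)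
  (by
    intro r f g; ext l
    simp only [smul_app, mul_app, Finset.mul_sum]
    exact Finset.sum_congr rfl fun _ _ => Finset.sum_congr rfl fun _ _ => by ring)

noncomputable instance : SMul G S.F := ⟨fun s f h => f (s⁻¹ * h)⟩

variable {S} in
theorem gsmul_app (s : G) (f : S.F) (h : G) : (s • f) h = f (s⁻¹ * h) := rfl

theorem d_equiv (s l : G) : S.d (s⁻¹ * l) = S.d l := by
  -- s • 1 is also a unit element
  have key : ∀ (f g : S.F), s • (f * g) = (s • f) * (s • g) := by
    intro f g; ext l
    simp only [gsmul_app, mul_app]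
    rw [← Equiv.sum_comp (Equiv.mulLeft s⁻¹)]
    refine Finset.sum_congr rfl fun h _ => ?_
    rw [← Equiv.sum_comp (Equiv.mulLeft s⁻¹)]
    refine Finset.sum_congr rfl fun h' _ => ?_
    simp [S.equiv]
  have h1 : (s • (1 : S.F)) * 1 = 1 := by
    have h2 : (1 : S.F) = s • (s⁻¹ • (1 : S.F)) := by ext l; rw [gsmul_app, gsmul_app, inv_inv, mul_inv_cancel_left]
    conv_lhs => rw [h2, ← h2]
    calc s • (1 : S.F) * 1 = s • (1 : S.F) * (s • (s⁻¹ • (1 : S.F))) := by rw [← h2]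
      _ = s • (1 * (s⁻¹ • (1 : S.F))) := (key _ _).symm
      _ = 1 := by rw [one_mul, ← h2]
  rw [mul_one] at h1
  exact congrFun h1 l

noncomputable instance : MulSemiringAction G S.F where
  one_smul f := by ext; simp [gsmul_app]
  mul_smul s t f := by ext; simp [gsmul_app, mul_assoc]
  smul_zero s := by ext; simp [gsmul_app, zero_app]
  smul_add s f g := by ext; simp [gsmul_app, add_app]
  smul_one s := by ext l; rw [gsmul_app]; exact S.d_equiv s l
  smul_mul s f g := by
    ext l
    simp only [gsmul_app, mul_app]
    rw [← Equiv.sum_comp (Equiv.mulLeft s⁻¹)]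
    refine Finset.sum_congr rfl fun h _ => ?_
    rw [← Equiv.sum_comp (Equiv.mulLeft s⁻¹)]
    refine Finset.sum_congr rfl fun h' _ => ?_
    simp [S.equiv]

instance : SMulCommClass G R S.F where
  smul_comm s r f := by ext; simp [gsmul_app, smul_app]

instance : Module.Finite R S.F := inferInstanceAs (Module.Finite R (G → R))
instance : Module.Free R S.F := inferInstanceAs (Module.Free R (G → R))

variable {S S'} in
noncomputable def hom (ψ : R →+* R') (h1 : ∀ h h' l, ψ (S.γ h h' l) = S'.γ h h' l)
    (h2 : ∀ h, ψ (S.d h) = S'.d h) : S.F →+* S'.F where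
  toFun f := ofV S' fun l => ψ (f l)
  map_one' := funext h2
  map_zero' := funext fun _ => map_zero ψ
  map_add' f g := funext fun l => map_add ψ (f l) (g l)
  map_mul' f g := by
    ext l
    simp only [mul_app, map_sum, map_mul, h1, ofV_app]

variable {S} in
theorem inv_const [Nontrivial R] (f : S.F) (h : ∀ s : G, s • f = f) : ∃ r : R, f = r • 1 := by
  have h1 : ∀ g : S.F, (∀ s : G, s • g = g) → ∀ l, g l = g 1 := by
    intro g hg l
    have := congrFun (hg l) l
    rw [gsmul_app] at this
    simpa using this.symm
  have hd : ∀ l, S.d l = S.d 1 := h1 1 (fun s => smul_one s)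
  have hdu : IsUnit (S.d 1) := by
    have := S.one 1 1
    simp only [hd, ← Finset.mul_sum, if_true] at this
    exact IsUnit.of_mul_eq_one _ this
  obtain ⟨e, he⟩ := hdu.exists_left_inv
  refine ⟨f 1 * e, ?_⟩
  ext l
  rw [smul_app, one_app, h1 f h l, hd, mul_assoc, he, mul_one]

variable {S} in
/-- the matrix of multiplication -/
noncomputable def mat (f : S.F) : Matrix G G R := Matrix.of fun h' l => ∑ h, f h * S.γ h h' l

variable {S} in
theorem mul_eq_vecMul (f f' : S.F) : toV (f * f') = Matrix.vecMul (toV f') (mat f) := by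
  ext l
  rw [toV_app, mul_app, Finset.sum_comm]
  simp only [Matrix.vecMul, dotProduct, mat, Matrix.of_apply, Finset.mul_sum, toV_app]
  exact Finset.sum_congr rfl fun _ _ => Finset.sum_congr rfl fun _ _ => by ring

variable {S} in
theorem pow_mul_eq_vecMul (f f' : S.F) (n : ℕ) : toV (f ^ n * f') = Matrix.vecMul (toV f') (mat f ^ n) := by
  induction n with
  | zero => simp
  | succ n ih =>
    rw [pow_succ', mul_assoc, mul_eq_vecMul, ih, Matrix.vecMul_vecMul, ← pow_succ]

theorem mat_one : mat (1 : S.F) = 1 := by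
  ext h' l
  rw [mat, Matrix.of_apply, Matrix.one_apply, ← S.one]; rfl

variable {S} in
theorem mat_add (f g : S.F) : mat (f + g) = mat f + mat g := by
  ext h' l
  simp only [mat, Matrix.of_apply, Matrix.add_apply, add_app, add_mul, Finset.sum_add_distrib]

variable {S} in
theorem mat_smul (r : R) (g : S.F) : mat (r • g) = r • mat g := by
  ext h' l
  simp only [mat, Matrix.of_apply, Matrix.smul_apply, smul_app, Finset.mul_sum, smul_eq_mul, mul_assoc]

variable {S} in
theorem isUnit_one_add {K : Type} [CommRing K] (e : R →+* K) (he : ∀ r, e r = 1 → IsUnit r) (r : R) (hr : e r = 0)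
    (f : S.F) : IsUnit (1 + r • f) := by
  have h1 : mat (1 + r • f) = 1 + r • mat f := by rw [mat_add, mat_smul, mat_one]
  have h2 : IsUnit (mat (1 + r • f)).det := by
    apply he
    rw [RingHom.map_det, h1]
    have : e.mapMatrix (1 + r • mat f) = 1 := by
      rw [map_add, map_one]
      have : e.mapMatrix (r • mat f) = 0 := by
        ext i j; simp [hr]
      rw [this, add_zero]
    rw [this, Matrix.det_one]
  refine IsUnit.of_mul_eq_one (ofV S (Matrix.vecMul (toV (1 : S.F)) (mat (1 + r • f))⁻¹)) (toV_inj ?_)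
  rw [mul_eq_vecMul, toV_ofV, Matrix.vecMul_vecMul, Matrix.nonsing_inv_mul _ h2, Matrix.vecMul_one]

end SC
end P2
end IGP

open Polynomial

namespace IGP

section P3
open Pointwise

theorem subsingleton_of_fixed {G X : Type} [Group G] [Finite G] [Finite X] [MulAction G X]
    [MulAction.IsPretransitive G X] (h : ∀ g : G, ∃ x : X, g • x = x) : Subsingleton X := by
  classical
  have := Fintype.ofFinite G
  have := Fintype.ofFinite X
  have : Fintype (Quotient (MulAction.orbitRel G X)) := Fintype.ofFinite _
  have hb := MulAction.sum_card_fixedBy_eq_card_orbits_mul_card_group G X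
  have hs : Subsingleton (Quotient (MulAction.orbitRel G X)) :=
    (MulAction.pretransitive_iff_subsingleton_quotient G X).1 inferInstance
  have h1 : Fintype.card (Quotient (MulAction.orbitRel G X)) ≤ 1 := Fintype.card_le_one_iff_subsingleton.2 hs
  have h2 : ∀ g : G, 1 ≤ Fintype.card (MulAction.fixedBy X g) := by
    intro g
    obtain ⟨x, hx⟩ := h g
    exact Fintype.card_pos_iff.2 ⟨⟨x, hx⟩⟩
  have h3 : Fintype.card (MulAction.fixedBy X (1 : G)) = Fintype.card X := by
    refine Fintype.card_congr (Equiv.subtypeUnivEquiv ?_)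
    intro x; simp
  rw [← Fintype.card_le_one_iff_subsingleton, ← h3]
  by_contra hc
  push Not at hc
  have : ∑ g : G, 1 < ∑ g : G, Fintype.card (MulAction.fixedBy X g) :=
    Finset.sum_lt_sum (fun g _ => h2 g) ⟨1, Finset.mem_univ _, hc⟩
  rw [hb] at this
  simp only [Finset.sum_const, smul_eq_mul, mul_one, Finset.card_univ] at this
  nlinarith

theorem isField_of_core {G E F : Type} [Group G] [Finite G] [Field E] [CommRing F] [Nontrivial F]
    [Algebra E F] [Module.Finite E F] [IsReduced F] [MulSemiringAction G F] [SMulCommClass G E F]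
    [Algebra.IsInvariant E F G]
    (H : ∀ g : G, ∃ (A k : Type) (_ : CommRing A) (_ : Field k) (j : A →+* F) (L : A →+* k),
      Function.Injective j ∧
      (∀ e : F, e * e = e → ∃ b, j b = e) ∧ ∀ b, ∃ b', j b' = g • j b ∧ L b' = L b) : IsField F := by
  classical
  have : IsArtinianRing F := IsArtinianRing.of_finite E F
  let e := IsArtinianRing.equivPi F
  have : Fintype (MaximalSpectrum F) := Fintype.ofFinite _
  have hex : ∀ m : MaximalSpectrum F, ∃ ε : F, (∀ m' : MaximalSpectrum F, m' ≠ m → ε ∈ m'.asIdeal) ∧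
      ε * ε = ε ∧ e ε = Pi.single m 1 := by
    intro m
    refine ⟨e.symm (Pi.single m 1), ?_, ?_, by simp⟩
    · intro m' hm'
      have h1 := IsArtinianRing.equivPi_apply F (e.symm (Pi.single m 1)) m'
      rw [← Ideal.Quotient.eq_zero_iff_mem]
      refine h1.symm.trans ?_
      change e (e.symm (Pi.single m 1)) m' = 0
      rw [AlgEquiv.apply_symm_apply, Pi.single_eq_of_ne hm']
    · apply e.injective
      rw [map_mul, AlgEquiv.apply_symm_apply, ← Pi.single_mul, one_mul]
  choose ε hε1 hε2 hε3 using hex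
  have hsum : ∑ m, ε m = 1 := by
    apply e.injective
    rw [map_sum, map_one]
    simp only [hε3]
    exact Finset.univ_sum_single (1 : ∀ I : MaximalSpectrum F, F ⧸ I.asIdeal)
  obtain ⟨I0, hI0⟩ := Ideal.exists_maximal F
  have hmax : ∀ x : MulAction.orbit G I0, x.1.IsMaximal := by
    rintro ⟨_, g, rfl⟩
    have : (g • I0).IsPrime := hI0.isPrime.smul g
    exact (IsArtinianRing.isPrime_iff_isMaximal _).1 this
  have horb : ∀ I : Ideal F, I.IsMaximal → I ∈ MulAction.orbit G I0 := by
    intro I hI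
    have h1 : I0.IsPrime := hI0.isPrime
    have h2 : I.IsPrime := hI.isPrime
    obtain ⟨g, hg⟩ := Algebra.IsInvariant.exists_smul_of_under_eq E F G I0 I (by
      have h3 : (I0.under E).IsPrime := inferInstance
      have h4 : (I.under E).IsPrime := inferInstance
      rw [(Ideal.eq_bot_or_top (I0.under E)).resolve_right h3.ne_top,
        (Ideal.eq_bot_or_top (I.under E)).resolve_right h4.ne_top])
    exact ⟨g, hg.symm⟩
  have hfix : ∀ g : G, ∃ x : MulAction.orbit G I0, g • x = x := by
    intro g
    obtain ⟨A, k, _, _, j, L, hj, hid, hg⟩ := H g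
    choose b hb using fun m => hid (ε m) (hε2 m)
    have hbs : ∑ m, b m = 1 := hj (by rw [map_sum, map_one]; simp only [hb, hsum])
    have : ∃ m, L (b m) ≠ 0 := by
      by_contra hc
      push Not at hc
      have := congrArg L hbs
      simp [map_sum, hc] at this
    obtain ⟨m, hm⟩ := this
    refine ⟨⟨m.asIdeal, horb _ m.isMaximal⟩, ?_⟩
    by_contra hne
    have hne' : g • m.asIdeal ≠ m.asIdeal := fun h => hne (Subtype.ext h)
    obtain ⟨b', hb', hL⟩ := hg (b m)
    have hgm : (g⁻¹ • m.asIdeal).IsMaximal := by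
      have : (g⁻¹ • m.asIdeal).IsPrime := m.isMaximal.isPrime.smul g⁻¹
      exact (IsArtinianRing.isPrime_iff_isMaximal _).1 this
    have h1 : g • ε m ∈ m.asIdeal := by
      have h2 : ε m ∈ g⁻¹ • m.asIdeal := hε1 m ⟨_, hgm⟩ (by
        intro h
        apply hne'
        have h3 : g⁻¹ • m.asIdeal = m.asIdeal := congrArg MaximalSpectrum.asIdeal h
        conv_lhs => rw [← h3]
        simp)
      rwa [Ideal.mem_inv_pointwise_smul_iff] at h2
    have h2 : ε m * (g • ε m) = 0 := by
      apply e.injective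
      rw [map_zero]
      funext m'
      have h3 := IsArtinianRing.equivPi_apply F (ε m * (g • ε m)) m'
      refine h3.trans ?_
      refine Ideal.Quotient.eq_zero_iff_mem.2 ?_
      by_cases hm' : m' = m
      · subst hm'; exact Ideal.mul_mem_left _ _ h1
      · exact Ideal.mul_mem_right _ _ (hε1 m m' hm')
    have h3 : b m * b' = 0 := hj (by rw [map_mul, map_zero, hb', hb, h2])
    have h4 := congrArg L h3
    rw [map_mul, map_zero, hL] at h4
    simp [hm] at h4
  have : Finite (MulAction.orbit G I0) := (Set.finite_range _ : (Set.range fun g : G => g • I0).Finite)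
  have hsub := subsingleton_of_fixed hfix
  have : IsLocalRing F := by
    refine IsLocalRing.of_unique_max_ideal ⟨I0, hI0, ?_⟩
    intro I hI
    exact congrArg Subtype.val (hsub.elim ⟨I, horb I hI⟩ ⟨I0, horb I0 hI0⟩)
  exact IsArtinianRing.isField_of_isReduced_of_isLocalRing F

theorem idem_core {A F k ι : Type} [CommRing A] [CommRing F] [Field k] (j : A →+* F)
    (hj : Function.Injective j) (L : ι → A →+* k) (z w u s : A) (N : ℕ) (hu : u = z * w)
    (hN : z ^ N = u * s) (hju : IsUnit (j u)) (hden : ∀ f : F, ∃ m b, j u ^ m * f = j b)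
    (hz : ∀ p, L p z = 0) (hker : ∀ f, (∀ p, L p f = 0) → ∃ b b', f = z * b + u * b')
    (e : F) (he : e * e = e) : ∃ b, j b = e := by
  have hjz : IsUnit (j z) := by
    rw [hu, map_mul] at hju; exact isUnit_of_mul_isUnit_left hju
  have h0 : ∃ m b, j z ^ m * e = j b := by
    obtain ⟨m, b, hb⟩ := hden e
    refine ⟨N * m, s ^ m * b, ?_⟩
    rw [pow_mul, ← map_pow, hN, map_mul, mul_pow, mul_right_comm, hb]
    simp [mul_comm]
  obtain ⟨m, hm⟩ := h0
  induction m with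
  | zero =>
    obtain ⟨b, hb⟩ := hm
    exact ⟨b, by simpa using hb.symm⟩
  | succ m ih =>
    obtain ⟨b, hb⟩ := hm
    apply ih
    have h1 : b * b = z ^ (m + 1) * b := by
      apply hj
      rw [map_mul, map_mul, ← hb, map_pow]
      linear_combination (j z ^ (m + 1)) ^ 2 * he
    obtain ⟨c, c', hc⟩ := hker b (by
      intro p
      have := congrArg (L p) h1
      rw [map_mul, map_mul, map_pow, hz] at this
      simpa using this)
    refine ⟨c + w * c', ?_⟩
    apply hjz.mul_left_cancel
    rw [← mul_assoc, ← pow_succ', hb, ← map_mul, hc, hu]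
    congr 1; ring

end P3
end IGP

open Polynomial

namespace IGP

section P4
variable {G : Type} [Group G] [Fintype G] [DecidableEq G]

/-- certificate data -/
structure CData (G W : Type) [CommRing W] where
  γ : G → G → G → W[X]
  d : G → W[X]
  lam : G → G → W
  z : G → G → W[X]
  z' : G → G → W[X]
  i : G → G → G → W[X]
  r : G → G → G → W[X]
  ρ1 : G → G → W[X]
  ρ2 : G → G → G → W[X]

/-- the discriminant-like polynomial -/
noncomputable def DD {W : Type} [CommRing W] (x : W) (a : G → W) : W[X] :=
  ∏ j, (X - C (a j + x))

/-- validity of a certificate -/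
structure CData.Valid {W : Type} [CommRing W] (c : CData G W) (x : W) (a : G → W) (N : ℕ) : Prop where
  comm : ∀ h h' l, c.γ h h' l = c.γ h' h l
  assoc : ∀ h h' h'' m, ∑ l, c.γ h h' l * c.γ l h'' m = ∑ l, c.γ h' h'' l * c.γ h l m
  one : ∀ h' l, ∑ h, c.d h * c.γ h h' l = if h' = l then DD x a else 0
  equiv : ∀ s h h' l, c.γ (s * h) (s * h') (s * l) = c.γ h h' l
  lam_inv : ∀ g h, c.lam g (g * h) = c.lam g h
  lam_mul : ∀ g h h', ∑ l, (c.γ h h' l).eval (a g) * c.lam g l =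
    (DD x a).eval (a g) * c.lam g h * c.lam g h'
  lam_one : ∀ g, ∑ h, (c.d h).eval (a g) * c.lam g h = 1
  zz : ∀ g l, ∑ h, ∑ h', c.z g h * c.z' g h' * c.γ h h' l =
    DD x a * (X - C (a g)) * c.d l + (X - C (a g)) ^ 2 * c.ρ1 g l
  lz : ∀ g p, ∑ h, (c.z g h).eval (a g) * c.lam g (p⁻¹ * h) = 0
  znil : ∀ g, (Matrix.of fun h' l => ∑ h, (c.z g h).eval (a g) * (c.γ h h' l).eval (a g)) ^ N = 0
  dec : ∀ g h l, (if h = l then DD x a else 0) =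
    DD x a * (∑ p, C (c.lam g (p⁻¹ * h)) * c.i g p l) +
    (∑ h₁, ∑ h', c.z g h₁ * c.r g h h' * c.γ h₁ h' l) + (X - C (a g)) * c.ρ2 g h l
  z1 : ∀ l, c.z 1 l = (X - C (a 1)) * c.d l

variable {k : Type} [Field k] {c : CData G k} {x : k} {a : G → k} {N : ℕ}

/-- structure constants from certificate -/
noncomputable def mkSC {R : Type} [CommRing R] (V : c.Valid x a N) (φ : k[X] →+* R) (v : R)
    (hv : φ (DD x a) * v = 1) : SC G R where
  γ h h' l := φ (c.γ h h' l) * v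
  d h := φ (c.d h)
  comm h h' l := by rw [V.comm]
  assoc h h' h'' m := by
    have h1 := congrArg φ (V.assoc h h' h'' m)
    simp only [map_sum, map_mul] at h1
    calc _ = v * v * ∑ l, φ (c.γ h h' l) * φ (c.γ l h'' m) := by
            rw [Finset.mul_sum]; exact Finset.sum_congr rfl fun _ _ => by ring
      _ = _ := by
            rw [h1, Finset.mul_sum]; exact Finset.sum_congr rfl fun _ _ => by ring
  one h' l := by
    have h1 := congrArg φ (V.one h' l)
    simp only [map_sum, map_mul] at h1
    simp only [← mul_assoc, ← Finset.sum_mul, h1]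
    split_ifs <;> simp [hv]
  equiv s h h' l := by rw [V.equiv]

variable (V : c.Valid x a N) (hD : ∀ g, (DD x a).eval (a g) ≠ 0)

include hD in
theorem DD_ne_zero : DD x a ≠ 0 := by
  intro h
  apply hD 1
  rw [h, eval_zero]

/-- generic structure constants -/
noncomputable def SE : SC G (RatFunc k) := mkSC V (algebraMap _ _)
  (algebraMap k[X] (RatFunc k) (DD x a))⁻¹ (by
    apply mul_inv_cancel₀
    simpa using DD_ne_zero hD)

/-- local structure constants -/
noncomputable def SO (g : G) : SC G (O (a g)) := mkSC V (polyO (a g))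
  ⟨(polyO (a g) (DD x a) : RatFunc k)⁻¹, inv_mem_O _ (by simpa using hD g)⟩ (by
    apply Subtype.ext
    have : algebraMap k[X] (RatFunc k) (DD x a) ≠ 0 := by simpa using DD_ne_zero hD
    exact mul_inv_cancel₀ this)

/-- residual structure constants -/
noncomputable def Sk (g : G) : SC G k := mkSC V (evalRingHom (a g)) ((DD x a).eval (a g))⁻¹ (by
    exact mul_inv_cancel₀ (hD g))

/-- inclusion -/
noncomputable def incl (g : G) : (SO V hD g).F →+* (SE V hD).F :=
  SC.hom (O (a g)).subtype (fun _ _ _ => rfl) (fun _ => rfl)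

theorem ev_inv (g : G) : ev (a g) ⟨(polyO (a g) (DD x a) : RatFunc k)⁻¹, inv_mem_O _ (by simpa using hD g)⟩
    = ((DD x a).eval (a g))⁻¹ := by
  have h1 : polyO (a g) (DD x a) * ⟨(polyO (a g) (DD x a) : RatFunc k)⁻¹, inv_mem_O _ (by simpa using hD g)⟩ = 1 := by
    apply Subtype.ext
    have : algebraMap k[X] (RatFunc k) (DD x a) ≠ 0 := by simpa using DD_ne_zero hD
    exact mul_inv_cancel₀ this
  have h2 := congrArg (ev (a g)) h1
  rw [map_mul, map_one] at h2
  have h3 := eq_inv_of_mul_eq_one_right h2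
  exact h3.trans (congrArg _ (ev_polyO _ _))

/-- reduction -/
noncomputable def red (g : G) : (SO V hD g).F →+* (Sk V hD g).F :=
  SC.hom (ev (a g)) (by
    intro h h' l
    refine (map_mul (ev (a g)) _ _).trans ?_
    rw [ev_polyO, ev_inv hD]; rfl) (fun h => ev_polyO _ _)

/-- the residual character -/
noncomputable def ell (g : G) : (Sk V hD g).F →+* k where
  toFun f := ∑ h, f h * c.lam g h
  map_one' := V.lam_one g
  map_zero' := by simp [SC.zero_app]
  map_add' f f' := by simp [SC.add_app, add_mul, Finset.sum_add_distrib]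
  map_mul' f f' := by
    simp only [SC.mul_app, Finset.sum_mul, Finset.mul_sum]
    rw [Finset.sum_comm]
    rw [Finset.sum_comm (f := fun i i_1 => f i_1 * c.lam g i_1 * (f' i * c.lam g i))]
    refine Finset.sum_congr rfl fun h _ => ?_
    rw [Finset.sum_comm]
    refine Finset.sum_congr rfl fun h' _ => ?_
    have h1 := V.lam_mul g h h'
    have : ∀ l, f h * f' h' * (Sk V hD g).γ h h' l * c.lam g l =
      f h * f' h' * ((DD x a).eval (a g))⁻¹ * ((c.γ h h' l).eval (a g) * c.lam g l) := by
      intro l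
      change f h * f' h' * ((c.γ h h' l).eval (a g) * ((DD x a).eval (a g))⁻¹) * c.lam g l = _
      ring
    simp only [this, ← Finset.mul_sum, h1]
    have := hD g
    field_simp

/-- residual characters of the local order -/
noncomputable def LL (g p : G) : (SO V hD g).F →+* k :=
  ((ell V hD g).comp (red V hD g)).comp (MulSemiringAction.toRingHom G _ p⁻¹)

theorem LL_apply (g p : G) (f : (SO V hD g).F) :
    LL V hD g p f = ∑ h, ev (a g) (f h) * c.lam g (p⁻¹ * h) := by
  change ∑ h, ev (a g) (f (p⁻¹⁻¹ * h)) * c.lam g h = _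
  rw [← Equiv.sum_comp (Equiv.mulLeft p⁻¹)]
  simp

theorem LL_smul (g : G) (f : (SO V hD g).F) : LL V hD g 1 (g • f) = LL V hD g 1 f := by
  rw [LL_apply, LL_apply]
  simp only [SC.gsmul_app]
  rw [← Equiv.sum_comp (Equiv.mulLeft g)]
  simp [V.lam_inv]

theorem incl_inj (g : G) : Function.Injective (incl V hD g) := by
  intro f f' h
  ext l
  exact congrFun h l

/-- elements from polynomial vectors -/
noncomputable def pv (g : G) (v : G → k[X]) : (SO V hD g).F := SC.ofV _ fun h => polyO (a g) (v h)

theorem red_eq_zero (g : G) (f : (SO V hD g).F) (h : red V hD g f = 0) :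
    ∃ f', f = uO (a g) (a g) • f' := by
  have h1 : ∀ l, ∃ f' : O (a g), f l = uO (a g) (a g) * f' := fun l =>
    exists_eq_uO_mul (f l) (congrFun h l)
  choose f' hf' using h1
  exact ⟨SC.ofV _ f', SC.F_ext hf'⟩

include hD in
theorem DDinv (g : G) : ∃ v : O (a g), polyO (a g) (DD x a) * v = 1 :=
  ⟨⟨(polyO (a g) (DD x a) : RatFunc k)⁻¹, inv_mem_O _ (by simpa using hD g)⟩, by
    apply Subtype.ext
    have : algebraMap k[X] (RatFunc k) (DD x a) ≠ 0 := by simpa using DD_ne_zero hD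
    exact mul_inv_cancel₀ this⟩

theorem DD_mul_pv (g : G) (v w : G → k[X]) :
    polyO (a g) (DD x a) • (pv V hD g v * pv V hD g w) =
      pv V hD g (fun l => ∑ h, ∑ h', v h * w h' * c.γ h h' l) := by
  refine SC.F_ext fun l => ?_
  rw [SC.smul_app, SC.mul_app]
  simp only [pv, SC.ofV_app, map_sum, map_mul, Finset.mul_sum]
  refine Finset.sum_congr rfl fun h _ => Finset.sum_congr rfl fun h' _ => ?_
  have h1 := (DDinv hD g).choose_spec
  have : (SO V hD g).γ h h' l = polyO (a g) (c.γ h h' l) *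
    ⟨(polyO (a g) (DD x a) : RatFunc k)⁻¹, inv_mem_O _ (by simpa using hD g)⟩ := rfl
  rw [this]
  have h2 : polyO (a g) (DD x a) * ⟨(polyO (a g) (DD x a) : RatFunc k)⁻¹, inv_mem_O _ (by simpa using hD g)⟩ = 1 := by
    apply Subtype.ext
    have : algebraMap k[X] (RatFunc k) (DD x a) ≠ 0 := by simpa using DD_ne_zero hD
    exact mul_inv_cancel₀ this
  linear_combination polyO (a g) (v h) * polyO (a g) (w h') * polyO (a g) (c.γ h h' l) * h2

theorem unit_of_ev (g : G) (f : O (a g)) (h : ev (a g) f = 1) : IsUnit f := by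
  have h1 : ev (a g) f ≠ 0 := by rw [h]; exact one_ne_zero
  refine IsUnit.of_mul_eq_one ⟨_, inv_mem_O f h1⟩ (Subtype.ext ?_)
  apply mul_inv_cancel₀
  intro h0
  apply h1
  have : f = 0 := Subtype.ext h0
  rw [this, map_zero]

theorem exists_w (g : G) : ∃ w, uO (a g) (a g) • (1 : (SO V hD g).F) = pv V hD g (c.z g) * w := by
  obtain ⟨v, hv⟩ := DDinv hD g
  have h1 := DD_mul_pv V hD g (c.z g) (c.z' g)
  have h2 : pv V hD g (fun l => ∑ h, ∑ h', c.z g h * c.z' g h' * c.γ h h' l) =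
      polyO (a g) (DD x a) • (uO (a g) (a g) • ((1 : (SO V hD g).F) +
       uO (a g) (a g) • (v • pv V hD g (c.ρ1 g)))) := by
    refine SC.F_ext fun l => ?_
    rw [pv, SC.ofV_app, V.zz]
    simp only [SC.smul_app, SC.add_app, SC.one_app, pv, SC.ofV_app, map_add, map_mul, map_pow, uO_eq]
    have : (SO V hD g).d l = polyO (a g) (c.d l) := rfl
    rw [this]
    linear_combination - polyO (a g) (X - C (a g)) ^ 2 * polyO (a g) (c.ρ1 g l) * hv
  have h3 : pv V hD g (c.z g) * pv V hD g (c.z' g) = uO (a g) (a g) • ((1 : (SO V hD g).F) +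
       uO (a g) (a g) • (v • pv V hD g (c.ρ1 g))) := by
    have := congrArg (v • ·) (h1.trans h2)
    have hv' : v * polyO (a g) (DD x a) = 1 := by rw [mul_comm]; exact hv
    simp only [smul_smul v, hv', one_smul] at this
    exact this
  have hun := SC.isUnit_one_add (S := SO V hD g) (ev (a g)) (unit_of_ev g) (uO (a g) (a g)) (by simp)
    (v • pv V hD g (c.ρ1 g))
  obtain ⟨e, he⟩ := hun.exists_right_inv
  refine ⟨pv V hD g (c.z' g) * e, ?_⟩
  rw [← mul_assoc, h3, smul_mul_assoc, he]

theorem exists_s (g : G) : ∃ s, pv V hD g (c.z g) ^ N = uO (a g) (a g) • (s : (SO V hD g).F) := by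
  apply red_eq_zero
  rw [map_pow]
  have h1 := SC.pow_mul_eq_vecMul (red V hD g (pv V hD g (c.z g))) 1 N
  rw [mul_one] at h1
  apply SC.toV_inj
  rw [h1]
  have h2 : SC.mat (red V hD g (pv V hD g (c.z g))) = ((DD x a).eval (a g))⁻¹ •
     (Matrix.of fun h' l => ∑ h, (c.z g h).eval (a g) * (c.γ h h' l).eval (a g)) := by
    ext h' l : 2
    simp only [SC.mat, Matrix.of_apply, Matrix.smul_apply, smul_eq_mul, Finset.mul_sum]
    refine Finset.sum_congr rfl fun h _ => ?_
    have e1 : red V hD g (pv V hD g (c.z g)) h = (c.z g h).eval (a g) := ev_polyO _ _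
    have e2 : (Sk V hD g).γ h h' l = (c.γ h h' l).eval (a g) * ((DD x a).eval (a g))⁻¹ := rfl
    rw [e1, e2]; ring
  rw [h2, _root_.smul_pow, V.znil, smul_zero, Matrix.vecMul_zero]
  rfl

theorem ker_LL (g : G) (f : (SO V hD g).F) (h : ∀ p, LL V hD g p f = 0) :
    ∃ b b', f = pv V hD g (c.z g) * b + (uO (a g) (a g) • (1 : (SO V hD g).F)) * b' := by
  obtain ⟨v, hv⟩ := DDinv hD g
  have h1 : ∀ p, ∃ q : O (a g), ∑ h, f h * polyO (a g) (C (c.lam g (p⁻¹ * h))) = uO (a g) (a g) * q := by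
    intro p
    apply exists_eq_uO_mul
    rw [← h p, LL_apply, map_sum]
    simp
  choose q hq using h1
  refine ⟨∑ h, f h • pv V hD g (c.r g h), ∑ p, q p • pv V hD g (c.i g p) + ∑ h, f h • v • pv V hD g (c.ρ2 g h), ?_⟩
  have hdec : ∀ h l, (if h = l then (1 : O (a g)) else 0) =
    ∑ p, polyO (a g) (C (c.lam g (p⁻¹ * h))) * polyO (a g) (c.i g p l) +
    (pv V hD g (c.z g) * pv V hD g (c.r g h)) l + uO (a g) (a g) * v * polyO (a g) (c.ρ2 g h l) := by
    intro h l
    have h2 := congrArg (polyO (a g)) (V.dec g h l)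
    have h3 := congrArg (fun f : (SO V hD g).F => f l) (DD_mul_pv V hD g (c.z g) (c.r g h))
    simp only [SC.smul_app] at h3
    have h4 : pv V hD g (fun l => ∑ h₁, ∑ h', c.z g h₁ * c.r g h h' * c.γ h₁ h' l) l =
      polyO (a g) (∑ h₁, ∑ h', c.z g h₁ * c.r g h h' * c.γ h₁ h' l) := rfl
    rw [h4] at h3
    rw [map_add, map_add, ← h3] at h2
    have h5 : polyO (a g) (if h = l then DD x a else 0) = polyO (a g) (DD x a) * (if h = l then (1 : O (a g)) else 0) := by
      split_ifs <;> simp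
    rw [h5] at h2
    simp only [map_mul, map_sum] at h2
    rw [← uO_eq] at h2
    linear_combination v * h2 + (- (if h = l then (1 : O (a g)) else 0) + ∑ p, polyO (a g) (C (c.lam g (p⁻¹ * h))) * polyO (a g) (c.i g p l) + (pv V hD g (c.z g) * pv V hD g (c.r g h)) l) * hv
  refine SC.F_ext fun l => ?_
  have h6 : f l = ∑ h, f h * (if h = l then (1 : O (a g)) else 0) := by
    rw [Finset.sum_eq_single l (fun b _ hb => by simp [hb]) (by simp)]; simp
  rw [h6]
  simp only [hdec, mul_add, Finset.sum_add_distrib]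
  rw [SC.add_app, SC.add_app, Finset.mul_sum, SC.sum_app, smul_mul_assoc, one_mul, SC.smul_app,
    SC.sum_app, smul_mul_assoc, one_mul, SC.smul_app, SC.sum_app]
  simp only [mul_smul_comm, SC.smul_app]
  have h9 : ∀ p, (f p • v • pv V hD g (c.ρ2 g p)) l = f p * (v * pv V hD g (c.ρ2 g p) l) := fun p => rfl
  have h7 : ∑ h, f h * ∑ p, polyO (a g) (C (c.lam g (p⁻¹ * h))) * polyO (a g) (c.i g p l) =
     uO (a g) (a g) * ∑ p, q p * pv V hD g (c.i g p) l := by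
    simp only [Finset.mul_sum]
    rw [Finset.sum_comm]
    refine Finset.sum_congr rfl fun p _ => ?_
    rw [← mul_assoc, ← hq, Finset.sum_mul]
    exact Finset.sum_congr rfl fun h _ => by rw [← mul_assoc]; rfl
  have h8 : ∑ h, f h * (uO (a g) (a g) * v * polyO (a g) (c.ρ2 g h l)) =
     uO (a g) (a g) * ∑ h, f h * (v * pv V hD g (c.ρ2 g h) l) := by
    simp only [Finset.mul_sum]
    refine Finset.sum_congr rfl fun p _ => ?_
    have : pv V hD g (c.ρ2 g p) l = polyO (a g) (c.ρ2 g p l) := rfl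
    rw [this]; ring
  rw [h7, h8]; ring

theorem incl_u (g : G) : incl V hD g (uO (a g) (a g) • 1) = uu (a g) • 1 := by
  refine SC.F_ext fun l => ?_
  rfl

theorem isUnit_incl_u (g : G) : IsUnit (incl V hD g (uO (a g) (a g) • 1)) := by
  rw [incl_u]
  refine IsUnit.of_mul_eq_one ((uu (a g))⁻¹ • 1) ?_
  rw [smul_mul_smul_comm, mul_inv_cancel₀ (uu_ne_zero _), one_smul, one_mul]

theorem exists_den (g : G) (f : (SE V hD).F) : ∃ m b, incl V hD g (uO (a g) (a g) • 1) ^ m * f = incl V hD g b := by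
  choose m hm using fun i => exists_pow_mul_mem (a g) (f i)
  have hbig : ∀ i, uu (a g) ^ (∑ i, m i) * f i ∈ O (a g) := by
    intro i
    obtain ⟨s, hs⟩ := Nat.exists_eq_add_of_le (Finset.single_le_sum (f := m) (fun _ _ => Nat.zero_le _)
      (Finset.mem_univ i))
    rw [hs, add_comm, pow_add, mul_assoc]
    exact mul_mem (pow_mem (uu_mem _ _) _) (hm i)
  refine ⟨∑ i, m i, SC.ofV _ fun i => ⟨_, hbig i⟩, ?_⟩
  rw [incl_u, _root_.smul_pow, one_pow, smul_mul_assoc, one_mul]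
  rfl

theorem idem_mem (g : G) (e : (SE V hD).F) (he : e * e = e) : ∃ b, incl V hD g b = e := by
  obtain ⟨w, hw⟩ := exists_w V hD g
  obtain ⟨s, hs⟩ := exists_s V hD g
  refine idem_core (incl V hD g) (incl_inj V hD g) (LL V hD g) (pv V hD g (c.z g)) w
    (uO (a g) (a g) • 1) s N hw (by rw [hs, smul_mul_assoc, one_mul]) (isUnit_incl_u V hD g)
    (exists_den V hD g) ?_ (ker_LL V hD g) e he
  intro p
  rw [LL_apply, ← V.lz g p]
  refine Finset.sum_congr rfl fun h _ => ?_
  congr 1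
  exact ev_polyO _ _

theorem red_SE : IsReduced (SE V hD).F := by
  refine (isReduced_iff_pow_one_lt 2 one_lt_two).2 ?_
  intro f hf
  by_contra hne
  obtain ⟨e, φ, he, hφ, i, hi⟩ := exists_scale (a 1) (SC.toV f) (fun h => hne (SC.toV_inj h))
  have h1 : incl V hD 1 (SC.ofV _ φ) = e • f := by
    ext l; exact (hφ l).symm
  have h2 : (SC.ofV (SO V hD 1) φ) ^ 2 = 0 := by
    apply incl_inj
    rw [map_pow, h1, _root_.smul_pow, hf, smul_zero, map_zero]
  obtain ⟨b, b', hb⟩ := ker_LL V hD 1 (SC.ofV _ φ) (by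
    intro p
    have := congrArg (LL V hD 1 p) h2
    rw [map_pow, map_zero] at this
    exact pow_eq_zero_iff two_ne_zero |>.1 this)
  have hz : pv V hD 1 (c.z 1) = uO (a 1) (a 1) • 1 := by
    refine SC.F_ext fun l => ?_
    change polyO (a 1) (c.z 1 l) = _
    rw [V.z1, map_mul]; rfl
  rw [hz, smul_mul_assoc, smul_mul_assoc, ← smul_add] at hb
  apply hi
  have := congrFun hb i
  change φ i = uO (a 1) (a 1) * _ at this
  rw [this, map_mul]; simp

theorem SC.faithful {R : Type} [CommRing R] [Nontrivial R] (S : SC G R) : FaithfulSMul G S.F := by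
  refine ⟨fun {s t} h => ?_⟩
  have h1 := congrFun (h (SC.ofV S (Pi.single 1 1))) s
  rw [SC.gsmul_app, SC.gsmul_app, SC.ofV_app, SC.ofV_app, inv_mul_cancel, Pi.single_eq_same] at h1
  by_contra hne
  rw [Pi.single_eq_of_ne] at h1
  · exact one_ne_zero h1
  · intro h2
    exact hne (inv_mul_eq_one.1 h2).symm

instance {R : Type} [CommRing R] [Nontrivial R] (S : SC G R) : Algebra.IsInvariant R S.F G where
  isInvariant f hf := by
    obtain ⟨r, hr⟩ := SC.inv_const f hf
    exact ⟨r, by rw [hr, Algebra.algebraMap_eq_smul_one]⟩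

include V hD in
theorem conclude : ∃ (N : Type) (_ : Field N) (_ : Algebra (RatFunc k) N),
      FiniteDimensional (RatFunc k) N ∧ IsGalois (RatFunc k) N ∧
          Nonempty ((N ≃ₐ[RatFunc k] N) ≃* G) := by
  have hred := red_SE V hD
  have hf := SC.faithful (SE V hD)
  have hnt : Nontrivial (SE V hD).F := inferInstanceAs (Nontrivial (G → RatFunc k))
  have hfield : IsField (SE V hD).F := by
    refine isField_of_core (G := G) (E := RatFunc k) ?_
    intro g
    refine ⟨(SO V hD g).F, k, inferInstance, inferInstance, incl V hD g, LL V hD g 1,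
      incl_inj V hD g, idem_mem V hD g, fun b => ⟨g • b, rfl, LL_smul V hD g b⟩⟩
  let _ := hfield.toField
  have hG : IsGaloisGroup G (RatFunc k) (SE V hD).F := ⟨hf, inferInstance, inferInstance⟩
  exact ⟨(SE V hD).F, hfield.toField, inferInstance, IsGaloisGroup.finiteDimensional G _ _,
    IsGaloisGroup.isGalois G _ _, ⟨(IsGaloisGroup.mulEquivAlgEquiv G _ _).symm⟩⟩

end P4
end IGP

open Polynomial

namespace IGP

section P5
variable {G : Type} [Group G] [Fintype G] [DecidableEq G]

/-- base change of certificates -/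
noncomputable def CData.map {W W' : Type} [CommRing W] [CommRing W'] (f : W →+* W') (c : CData G W) : CData G W' where
  γ h h' l := (c.γ h h' l).map f
  d h := (c.d h).map f
  lam g h := f (c.lam g h)
  z g h := (c.z g h).map f
  z' g h := (c.z' g h).map f
  i g h l := (c.i g h l).map f
  r g h l := (c.r g h l).map f
  ρ1 g h := (c.ρ1 g h).map f
  ρ2 g h l := (c.ρ2 g h l).map f

theorem DD_map {W W' : Type} [CommRing W] [CommRing W'] (f : W →+* W') (x : W) (a : G → W) :
    (DD x a).map f = DD (f x) (fun g => f (a g)) := by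
  simp [DD, Polynomial.map_prod]

theorem map_eval' {W W' : Type} [CommRing W] [CommRing W'] (f : W →+* W') (p : W[X]) (x : W) :
    (p.map f).eval (f x) = f (p.eval x) := by
  rw [eval_map, eval₂_hom]

theorem map_ite' {W W' : Type} [CommRing W] [CommRing W'] (f : W →+* W') (p : W[X]) (P : Prop) [Decidable P] :
    (if P then p else 0).map f = if P then p.map f else 0 := by
  split_ifs <;> simp

theorem CData.Valid.map {W W' : Type} [CommRing W] [CommRing W'] (f : W →+* W') {c : CData G W} {x : W} {a : G → W}
    {N : ℕ} (V : c.Valid x a N) : (c.map f).Valid (f x) (fun g => f (a g)) N where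
  comm h h' l := by simp only [CData.map, V.comm h h' l]
  assoc h h' h'' m := by
    have := congrArg (Polynomial.map f) (V.assoc h h' h'' m)
    simpa only [CData.map, Polynomial.map_sum, Polynomial.map_mul] using this
  one h' l := by
    have := congrArg (Polynomial.map f) (V.one h' l)
    simpa only [CData.map, Polynomial.map_sum, Polynomial.map_mul, map_ite', DD_map] using this
  equiv s h h' l := by simp only [CData.map, V.equiv s h h' l]
  lam_inv g h := by simp only [CData.map, V.lam_inv]
  lam_mul g h h' := by
    have := congrArg f (V.lam_mul g h h')
    simpa only [CData.map, ← DD_map, map_eval', map_sum, map_mul] using this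
  lam_one g := by
    have := congrArg f (V.lam_one g)
    simpa only [CData.map, map_eval', map_sum, map_mul, map_one] using this
  zz g l := by
    have := congrArg (Polynomial.map f) (V.zz g l)
    simpa only [CData.map, Polynomial.map_sum, Polynomial.map_mul, DD_map, Polynomial.map_add, Polynomial.map_sub,
      Polynomial.map_pow, map_X, map_C] using this
  lz g p := by
    have := congrArg f (V.lz g p)
    simpa only [CData.map, map_eval', map_sum, map_mul, map_zero] using this
  znil g := by
    have := congrArg f.mapMatrix (V.znil g)
    rw [map_pow, map_zero] at this
    rw [← this]
    congr 1
    ext h' l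
    simp only [CData.map, map_eval', map_sum, map_mul, Matrix.of_apply, RingHom.mapMatrix_apply, Matrix.map_apply]
  dec g h l := by
    have := congrArg (Polynomial.map f) (V.dec g h l)
    simpa only [CData.map, Polynomial.map_sum, Polynomial.map_mul, DD_map, Polynomial.map_add, Polynomial.map_sub,
      Polynomial.map_pow, map_X, map_C, map_ite'] using this
  z1 l := by
    have := congrArg (Polynomial.map f) (V.z1 l)
    simpa only [CData.map, Polynomial.map_mul, Polynomial.map_sub, map_X, map_C] using this

theorem CData.Valid.of_map {W W' : Type} [CommRing W] [CommRing W'] (f : W →+* W') (hf : Function.Injective f)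
    {c : CData G W} {x : W} {a : G → W}
    {N : ℕ} (V : (c.map f).Valid (f x) (fun g => f (a g)) N) : c.Valid x a N where
  comm h h' l := Polynomial.map_injective f hf (V.comm h h' l)
  assoc h h' h'' m := by
    apply Polynomial.map_injective f hf
    simpa only [CData.map, Polynomial.map_sum, Polynomial.map_mul] using V.assoc h h' h'' m
  one h' l := by
    apply Polynomial.map_injective f hf
    simpa only [CData.map, Polynomial.map_sum, Polynomial.map_mul, map_ite', DD_map] using V.one h' l
  equiv s h h' l := Polynomial.map_injective f hf (V.equiv s h h' l)
  lam_inv g h := hf (V.lam_inv g h)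
  lam_mul g h h' := by
    apply hf
    simpa only [CData.map, ← DD_map, map_eval', map_sum, map_mul] using V.lam_mul g h h'
  lam_one g := by
    apply hf
    simpa only [CData.map, map_eval', map_sum, map_mul, map_one] using V.lam_one g
  zz g l := by
    apply Polynomial.map_injective f hf
    simpa only [CData.map, Polynomial.map_sum, Polynomial.map_mul, DD_map, Polynomial.map_add, Polynomial.map_sub,
      Polynomial.map_pow, map_X, map_C] using V.zz g l
  lz g p := by
    apply hf
    simpa only [CData.map, map_eval', map_sum, map_mul, map_zero] using V.lz g p
  znil g := by
    have hi : Function.Injective (f.mapMatrix : Matrix G G W →+* _) := by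
      intro M M' h
      ext i j
      exact hf (congrFun (congrFun h i) j)
    apply hi
    rw [map_pow, map_zero]
    rw [← V.znil g]
    congr 1
    ext h' l
    simp only [CData.map, map_eval', map_sum, map_mul, Matrix.of_apply, RingHom.mapMatrix_apply, Matrix.map_apply]
  dec g h l := by
    apply Polynomial.map_injective f hf
    simpa only [CData.map, Polynomial.map_sum, Polynomial.map_mul, DD_map, Polynomial.map_add, Polynomial.map_sub,
      Polynomial.map_pow, map_X, map_C, map_ite'] using V.dec g h l
  z1 l := by
    apply Polynomial.map_injective f hf
    simpa only [CData.map, Polynomial.map_mul, Polynomial.map_sub, map_X, map_C] using V.z1 l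

theorem exists_lift_poly {k W : Type} [CommRing k] [CommRing W] [Algebra k W] (A : Subalgebra k W) (p : W[X])
    (h : ∀ n, p.coeff n ∈ A) : ∃ q : A[X], q.map (A.val : A →+* W) = p := by
  have : p ∈ Polynomial.lifts (A.val : A →+* W) := by
    rw [Polynomial.lifts_iff_coeff_lifts]
    intro n
    exact ⟨⟨_, h n⟩, rfl⟩
  exact (Polynomial.mem_lifts p).1 this

theorem exists_fg {k W : Type} [CommRing k] [CommRing W] [Algebra k W] (c : CData G W) (x : W) :
    ∃ A : Subalgebra k W, A.FG ∧ x ∈ A ∧ ∃ c' : CData G A, c'.map (A.val : A →+* W) = c := by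
  classical
  let T : Set W[X] := (Set.range fun t : G × G × G => c.γ t.1 t.2.1 t.2.2) ∪ Set.range c.d ∪
    (Set.range fun t : G × G => c.z t.1 t.2) ∪ (Set.range fun t : G × G => c.z' t.1 t.2) ∪
    (Set.range fun t : G × G × G => c.i t.1 t.2.1 t.2.2) ∪
    (Set.range fun t : G × G × G => c.r t.1 t.2.1 t.2.2) ∪ (Set.range fun t : G × G => c.ρ1 t.1 t.2) ∪
    (Set.range fun t : G × G × G => c.ρ2 t.1 t.2.1 t.2.2) ∪ (Set.range fun t : G × G => C (c.lam t.1 t.2)) ∪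
    {C x}
  have hT : T.Finite := by
    refine ((((((((Set.Finite.union ?_ ?_).union ?_).union ?_).union ?_).union ?_).union ?_).union ?_).union ?_).union ?_ <;>
      exact Set.toFinite _
  let S : Set W := ⋃ p ∈ T, (p.coeffs : Set W)
  have hS : S.Finite := hT.biUnion fun p _ => Finset.finite_toSet _
  let A := Algebra.adjoin k S
  have hA : ∀ p ∈ T, ∀ n, p.coeff n ∈ A := by
    intro p hp n
    by_cases h : p.coeff n = 0
    · rw [h]; exact A.zero_mem
    · refine Algebra.subset_adjoin ?_
      exact Set.mem_biUnion hp (by simpa using Polynomial.coeff_mem_coeffs h)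
  have hA' : ∀ w, C w ∈ T → w ∈ A := by
    intro w hw
    simpa using hA _ hw 0
  refine ⟨A, Subalgebra.fg_def.2 ⟨S, hS, rfl⟩, hA' x (by simp [T]), ?_⟩
  have hγ : ∀ h h' l, ∃ q : A[X], q.map (A.val : A →+* W) = c.γ h h' l := fun h h' l =>
    exists_lift_poly A _ (hA _ (by simp [T]))
  have hd : ∀ h, ∃ q : A[X], q.map (A.val : A →+* W) = c.d h := fun h =>
    exists_lift_poly A _ (hA _ (by simp [T]))
  have hz : ∀ h l, ∃ q : A[X], q.map (A.val : A →+* W) = c.z h l := fun h l =>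
    exists_lift_poly A _ (hA _ (by simp [T]))
  have hz' : ∀ h l, ∃ q : A[X], q.map (A.val : A →+* W) = c.z' h l := fun h l =>
    exists_lift_poly A _ (hA _ (by simp [T]))
  have hi : ∀ h h' l, ∃ q : A[X], q.map (A.val : A →+* W) = c.i h h' l := fun h h' l =>
    exists_lift_poly A _ (hA _ (by simp [T]))
  have hr : ∀ h h' l, ∃ q : A[X], q.map (A.val : A →+* W) = c.r h h' l := fun h h' l =>
    exists_lift_poly A _ (hA _ (by simp [T]))
  have hρ1 : ∀ h l, ∃ q : A[X], q.map (A.val : A →+* W) = c.ρ1 h l := fun h l =>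
    exists_lift_poly A _ (hA _ (by simp [T]))
  have hρ2 : ∀ h h' l, ∃ q : A[X], q.map (A.val : A →+* W) = c.ρ2 h h' l := fun h h' l =>
    exists_lift_poly A _ (hA _ (by simp [T]))
  have hl : ∀ g h, ∃ q : A, (A.val : A →+* W) q = c.lam g h := fun g h =>
    ⟨⟨c.lam g h, hA' _ (by simp [T])⟩, rfl⟩
  choose γ hγ using hγ
  choose d hd using hd
  choose z hz using hz
  choose z' hz' using hz'
  choose i hi using hi
  choose r hr using hr
  choose ρ1 hρ1 using hρ1
  choose ρ2 hρ2 using hρ2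
  choose l hl using hl
  refine ⟨⟨γ, d, l, z, z', i, r, ρ1, ρ2⟩, ?_⟩
  simp only [CData.map, hγ, hd, hz, hz', hi, hr, hρ1, hρ2, hl]

theorem exists_point {k A : Type} [Field k] [IsAlgClosed k] [CommRing A] [IsDomain A] [Algebra k A]
    [Algebra.FiniteType k A] (b : A) (hb : b ≠ 0) : ∃ π : A →ₐ[k] k, π b ≠ 0 := by
  let B := Localization.Away b
  have : IsDomain B := IsLocalization.isDomain_localization (powers_le_nonZeroDivisors_of_noZeroDivisors hb)
  have : Algebra.FiniteType A B := IsLocalization.finiteType_of_monoid_fg (Submonoid.powers b) _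
  have : Algebra.FiniteType k B := Algebra.FiniteType.trans ‹_› this
  obtain ⟨m, hm⟩ := Ideal.exists_maximal B
  let F := B ⧸ m
  let _ : Field F := Ideal.Quotient.field m
  have : Algebra.FiniteType k F := inferInstance
  have : Module.Finite k F := finite_of_finite_type_of_isJacobsonRing k F
  have hbij : Function.Bijective (algebraMap k F) := IsAlgClosed.algebraMap_bijective_of_isIntegral
  let e : k ≃ₐ[k] F := AlgEquiv.ofBijective (Algebra.ofId k F) hbij
  let π : A →ₐ[k] k := (e.symm : F →ₐ[k] k).comp ((Ideal.Quotient.mkₐ k m).comp (IsScalarTower.toAlgHom k A B))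
  refine ⟨π, ?_⟩
  have : IsUnit (algebraMap A B b) := IsLocalization.Away.algebraMap_isUnit b
  have h2 := (this.map ((e.symm : F →ₐ[k] k).comp (Ideal.Quotient.mkₐ k m)))
  exact h2.ne_zero

theorem conclude_W {k : Type} [Field k] [IsAlgClosed k] {c : CData G (PowerSeries k)} {a : G → k} {N : ℕ}
    (V : c.Valid PowerSeries.X (fun g => PowerSeries.C (a g)) N) :
    ∃ (N : Type) (_ : Field N) (_ : Algebra (RatFunc k) N),
      FiniteDimensional (RatFunc k) N ∧ IsGalois (RatFunc k) N ∧
          Nonempty ((N ≃ₐ[RatFunc k] N) ≃* G) := by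
  obtain ⟨A, hA, hx, c', rfl⟩ := exists_fg (k := k) c PowerSeries.X
  have V' : c'.Valid (⟨PowerSeries.X, hx⟩ : A) (fun g => algebraMap k A (a g)) N :=
    CData.Valid.of_map (A.val : A →+* PowerSeries k) Subtype.val_injective V
  have : Algebra.FiniteType k A := A.fg_iff_finiteType.1 hA
  let b : A := ∏ g, (DD (⟨PowerSeries.X, hx⟩ : A) (fun g => algebraMap k A (a g))).eval (algebraMap k A (a g))
  have hb : b ≠ 0 := by
    rw [Finset.prod_ne_zero_iff]
    intro g _
    rw [DD, eval_prod, Finset.prod_ne_zero_iff]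
    intro j _ h
    have h2 := congrArg (A.val) h
    rw [eval_sub, eval_X, eval_C] at h2
    have h3 : PowerSeries.C (a g) - (PowerSeries.C (a j) + PowerSeries.X) = (0 : PowerSeries k) := h2
    have h4 := congrArg (PowerSeries.coeff 1) h3
    simp [PowerSeries.coeff_C] at h4
  obtain ⟨π, hπ⟩ := exists_point (k := k) b hb
  have V2 := V'.map (π : A →+* k)
  have ha : (fun g => (π : A →+* k) (algebraMap k A (a g))) = a := by
    funext g; exact π.commutes _
  rw [ha] at V2
  refine conclude V2 ?_
  intro g h0
  apply hπ
  simp only [b, map_prod]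
  refine Finset.prod_eq_zero (Finset.mem_univ g) ?_
  have := map_eval' (π : A →+* k) (DD (⟨PowerSeries.X, hx⟩ : A) (fun g => algebraMap k A (a g))) (algebraMap k A (a g))
  rw [DD_map, ha] at this
  refine this.symm.trans ?_
  rw [← h0]
  congr 1
  exact π.commutes _

end P5
end IGP

open Polynomial

namespace IGP

section P6
variable {k : Type} [Field k]

/-- power series over the local ring -/
abbrev QQ (c : k) : Type := PowerSeries (O c)

/-- power series with coefficients in a subring -/
noncomputable def PS (S : Subring (RatFunc k)) : Subring (PowerSeries (RatFunc k)) :=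
  (PowerSeries.map S.subtype).range

theorem mem_PS {S : Subring (RatFunc k)} {f : PowerSeries (RatFunc k)} :
    f ∈ PS S ↔ ∀ n, PowerSeries.coeff n f ∈ S := by
  constructor
  · rintro ⟨q, rfl⟩ n
    rw [PowerSeries.coeff_map]
    exact (PowerSeries.coeff n q).2
  · intro h
    refine ⟨PowerSeries.mk fun n => ⟨_, h n⟩, ?_⟩
    ext n
    simp

/-- inclusion of power series -/
noncomputable def io (c : k) : QQ c →+* PowerSeries (RatFunc k) := PowerSeries.map (O c).subtype

theorem io_mem (c : k) (q : QQ c) : io c q ∈ PS (O c) := ⟨q, rfl⟩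

theorem exists_io {c : k} {f : PowerSeries (RatFunc k)} (h : f ∈ PS (O c)) : ∃ q, io c q = f := h

theorem io_inj (c : k) : Function.Injective (io c) :=
  PowerSeries.map_injective _ Subtype.val_injective

/-- evaluation of power series -/
noncomputable def evW (c : k) : QQ c →+* PowerSeries k := PowerSeries.map (ev c)

/-- the uniformizer -/
noncomputable def uQ (c : k) : QQ c := PowerSeries.C (uO c c)

theorem uQ_ne_zero (c : k) : uQ c ≠ 0 := by
  intro h
  have := congrArg (PowerSeries.coeff 0) h
  simp [uQ] at this
  exact uu_ne_zero c (congrArg Subtype.val this)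

theorem io_uQ (c : k) : io c (uQ c) = PowerSeries.C (uu c) := by
  simp [io, uQ, uO]

@[simp] theorem evW_uQ (c : k) : evW c (uQ c) = 0 := by
  simp [evW, uQ]

theorem exists_eq_uQ_mul {c : k} (q : QQ c) (h : evW c q = 0) : ∃ r, q = uQ c * r := by
  have h1 : ∀ n, ev c (PowerSeries.coeff n q) = 0 := by
    intro n
    have := congrArg (PowerSeries.coeff n) h
    simpa [evW] using this
  choose g hg using fun n => exists_eq_uO_mul _ (h1 n)
  refine ⟨PowerSeries.mk g, ?_⟩
  ext n
  rw [uQ, PowerSeries.coeff_C_mul, PowerSeries.coeff_mk, ← hg]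

/-- the embedding of polynomials over `k⟦X⟧` -/
noncomputable def JJ : (PowerSeries k)[X] →+* PowerSeries (RatFunc k) :=
  eval₂RingHom (PowerSeries.map (RatFunc.C : k →+* RatFunc k)) (PowerSeries.C RatFunc.X)

/-- the embedding of polynomials over `k⟦X⟧`, local version -/
noncomputable def Jq (c : k) : (PowerSeries k)[X] →+* QQ c :=
  eval₂RingHom (PowerSeries.map ((polyO c).comp C)) (PowerSeries.C (polyO c X))

theorem io_Jq (c : k) (p : (PowerSeries k)[X]) : io c (Jq c p) = JJ p := by
  have : (io c).comp (Jq c) = JJ := by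
    refine Polynomial.ringHom_ext' ?_ ?_
    · refine RingHom.ext fun f => ?_
      ext n : 1
      simp [io, Jq, JJ]
    · simp [io, Jq, JJ]
  exact congrFun (congrArg DFunLike.coe this) p

theorem evW_Jq (c : k) (p : (PowerSeries k)[X]) : evW c (Jq c p) = p.eval (PowerSeries.C c) := by
  have : (evW c).comp (Jq c) = evalRingHom (PowerSeries.C c) := by
    refine Polynomial.ringHom_ext' ?_ ?_
    · refine RingHom.ext fun f => ?_
      ext n : 1
      simp [evW, Jq]
    · simp [evW, Jq]
  exact congrFun (congrArg DFunLike.coe this) p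

theorem JJ_mem (c : k) (p : (PowerSeries k)[X]) : JJ p ∈ PS (O c) := by
  rw [← io_Jq c]; exact io_mem _ _

theorem coeff_JJ (p : (PowerSeries k)[X]) (n : ℕ) : PowerSeries.coeff n (JJ p) =
    algebraMap k[X] (RatFunc k) (∑ i ∈ p.support, monomial i (PowerSeries.coeff n (p.coeff i))) := by
  simp only [JJ, coe_eval₂RingHom, eval₂_eq_sum, Polynomial.sum, map_sum]
  refine Finset.sum_congr rfl fun i _ => ?_
  rw [← map_pow, PowerSeries.coeff_mul_C, PowerSeries.coeff_map, ← C_mul_X_pow_eq_monomial]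
  simp

theorem JJ_inj : Function.Injective (JJ : (PowerSeries k)[X] →+* _) := by
  rw [injective_iff_map_eq_zero]
  intro p hp
  ext i n
  have h1 := congrArg (PowerSeries.coeff n) hp
  rw [coeff_JJ, map_zero, map_eq_zero_iff _ (RatFunc.algebraMap_injective k)] at h1
  have h2 := congrArg (fun q => q.coeff i) h1
  simp only [finset_sum_coeff, coeff_monomial, Finset.sum_ite_eq', coeff_zero] at h2
  by_cases h : p.coeff i = 0
  · simp [h]
  · rw [if_pos (mem_support_iff.2 h)] at h2
    simpa using h2

theorem Jq_inj (c : k) : Function.Injective (Jq c) := by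
  intro p q h
  apply JJ_inj
  rw [← io_Jq c, ← io_Jq c, h]

theorem Jq_sub (c : k) : Jq c (X - C (PowerSeries.C c)) = uQ c := by
  apply io_inj
  simp [Jq, uQ, io, uO, uu]

theorem JJ_sub (c : k) : JJ (X - C (PowerSeries.C c)) = PowerSeries.C (uu c) := by
  rw [← io_Jq c, Jq_sub, io_uQ]

instance : IsDomain (PowerSeries (RatFunc k)) := inferInstance

instance (c : k) : IsDomain (QQ c) := inferInstance

theorem exists_div (c : k) (m : ℕ) (p : (PowerSeries k)[X]) (q : QQ c) (h : Jq c p = uQ c ^ m * q) :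
    ∃ p', p = (X - C (PowerSeries.C c)) ^ m * p' ∧ Jq c p' = q := by
  induction m generalizing p q with
  | zero => exact ⟨p, by simp, by simpa using h⟩
  | succ m ih =>
    have h1 : p.eval (PowerSeries.C c) = 0 := by
      rw [← evW_Jq, h, pow_succ]; simp
    obtain ⟨p1, hp1⟩ := dvd_iff_isRoot.2 h1
    have h2 : Jq c p1 = uQ c ^ m * q := by
      rw [hp1, map_mul, Jq_sub] at h
      refine mul_left_cancel₀ (uQ_ne_zero c) ?_
      rw [h]; ring
    obtain ⟨p', h3, h4⟩ := ih p1 q h2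
    refine ⟨p', ?_, h4⟩
    rw [hp1, h3]; ring

theorem exists_trunc (c : k) (m : ℕ) (q : QQ c) : ∃ p r, q = Jq c p + uQ c ^ m * r := by
  induction m with
  | zero => exact ⟨0, q, by simp⟩
  | succ m ih =>
    obtain ⟨p, r, h⟩ := ih
    have h1 : evW c (r - Jq c (C (evW c r))) = 0 := by
      rw [map_sub, evW_Jq]; simp
    obtain ⟨s, hs⟩ := exists_eq_uQ_mul _ h1
    refine ⟨p + (X - C (PowerSeries.C c)) ^ m * C (evW c r), s, ?_⟩
    rw [map_add, map_mul, map_pow, Jq_sub, h]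
    linear_combination uQ c ^ m * hs

theorem exists_JJ [IsAlgClosed k] (f : PowerSeries (RatFunc k)) (h : ∀ c, f ∈ PS (O c)) (m : ℕ)
    (hm : PowerSeries.C (RatFunc.X⁻¹ ^ m) * f ∈ PS (Oinf k)) : ∃ p, JJ p = f := by
  choose p hp using fun n => exists_poly_of_forall_mem (PowerSeries.coeff n f) fun c => mem_PS.1 (h c) n
  have hd : ∀ n, (p n).natDegree ≤ m := by
    intro n
    apply natDegree_le_of_mem_Oinf
    rw [← hp, ← PowerSeries.coeff_C_mul]
    exact mem_PS.1 hm n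
  refine ⟨∑ i ∈ Finset.range (m + 1), C (PowerSeries.mk fun n => (p n).coeff i) * X ^ i, ?_⟩
  ext n : 1
  rw [hp, (p n).as_sum_range_C_mul_X_pow' (Nat.lt_succ_of_le (hd n))]
  simp only [map_sum, JJ, map_mul, coe_eval₂RingHom, eval₂_C, eval₂_X, map_pow]
  refine Finset.sum_congr rfl fun i _ => ?_
  rw [← map_pow, PowerSeries.coeff_mul_C]
  simp

theorem isUnit_mat {R G : Type} [CommRing R] [Fintype G] [DecidableEq G] (M : Matrix G G (PowerSeries R))
    (h : M.map (PowerSeries.constantCoeff (R := R)) = 1) : IsUnit M := by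
  rw [Matrix.isUnit_iff_isUnit_det, PowerSeries.isUnit_iff_constantCoeff]
  have := RingHom.map_det (PowerSeries.constantCoeff (R := R)) M
  rw [this]
  have h2 : (PowerSeries.constantCoeff (R := R)).mapMatrix M = 1 := h
  rw [h2]; simp

end P6
end IGP

open Polynomial

namespace IGP

section P7a
variable {k : Type} [Field k] {G : Type} [Group G]

/-- constants -/
noncomputable def kp : k →+* PowerSeries (RatFunc k) := (PowerSeries.C).comp RatFunc.C

/-- constants, local version -/
noncomputable def kq (c : k) : k →+* QQ c := (PowerSeries.C).comp ((polyO c).comp C)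

theorem io_kq (c r : k) : io c (kq c r) = kp r := by
  simp [io, kq, kp]

theorem evW_kq (c r : k) : evW c (kq c r) = PowerSeries.C r := by
  simp [evW, kq]

/-- local context: a cyclic subgroup with a faithful character and a root of `u/(u-x)` -/
structure LCtx (k G : Type) [Field k] [Group G] where
  c : k
  g : G
  chi : G → k
  chi_one : chi 1 = 1
  chi_mul : ∀ w ∈ Subgroup.zpowers g, ∀ v ∈ Subgroup.zpowers g, chi (w * v) = chi w * chi v
  chi_inj : ∀ v ∈ Subgroup.zpowers g, chi v = 1 → v = 1
  chi_pow : ∀ v ∈ Subgroup.zpowers g, chi v ^ orderOf g = 1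
  chi_prim : IsPrimitiveRoot (chi g) (orderOf g)
  y : PowerSeries (RatFunc k)
  y' : PowerSeries (RatFunc k)
  hy : y * y' = 1
  hyn : y ^ orderOf g * (PowerSeries.C (uu c) - PowerSeries.X) = PowerSeries.C (uu c)
  hy' : PowerSeries.constantCoeff y' = 1

theorem exists_chi [IsAlgClosed k] [CharZero k] [Finite G] (g : G) : ∃ chi : G → k, chi 1 = 1 ∧
    (∀ w ∈ Subgroup.zpowers g, ∀ v ∈ Subgroup.zpowers g, chi (w * v) = chi w * chi v) ∧
    (∀ v ∈ Subgroup.zpowers g, chi v = 1 → v = 1) ∧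
    (∀ v ∈ Subgroup.zpowers g, chi v ^ orderOf g = 1) ∧ IsPrimitiveRoot (chi g) (orderOf g) := by
  classical
  have hn : 0 < orderOf g := orderOf_pos g
  have : NeZero (orderOf g) := ⟨hn.ne'⟩
  obtain ⟨ζ, hζ⟩ := HasEnoughRootsOfUnity.exists_primitiveRoot k (orderOf g)
  obtain ⟨z, rfl⟩ := hζ.isUnit hn.ne'
  have hz : IsPrimitiveRoot z (orderOf g) := IsPrimitiveRoot.coe_units_iff.1 hζ
  let g0 : Subgroup.zpowers g := ⟨g, Subgroup.mem_zpowers g⟩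
  have hg0 : ∀ x, x ∈ Subgroup.zpowers g0 := by
    rintro ⟨x, i, hi⟩
    exact ⟨i, Subtype.ext (by simpa [g0] using hi)⟩
  have ho : orderOf g0 = orderOf g := Subgroup.orderOf_mk g _
  have hd : orderOf z ∣ orderOf g0 := by rw [ho, hz.eq_orderOf]
  let φ := monoidHomOfForallMemZpowers hg0 hd
  have hφ : φ g0 = z := monoidHomOfForallMemZpowers_apply_gen hg0 hd
  have hpow : ∀ v : Subgroup.zpowers g, v ^ orderOf g = 1 := by
    intro v
    obtain ⟨i, hi⟩ := hg0 v
    rw [← hi]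
    show (g0 ^ i) ^ orderOf g = 1
    rw [← ho, ← zpow_natCast, ← zpow_mul, mul_comm, zpow_mul, zpow_natCast, pow_orderOf_eq_one, one_zpow]
  refine ⟨fun v => if h : v ∈ Subgroup.zpowers g then (φ ⟨v, h⟩ : k) else 0, ?_, ?_, ?_, ?_, ?_⟩
  · beta_reduce
    rw [dif_pos (one_mem _)]
    exact congrArg Units.val (map_one φ)
  · intro w hw v hv
    beta_reduce
    rw [dif_pos (mul_mem hw hv), dif_pos hw, dif_pos hv, ← Units.val_mul, ← map_mul]; rfl
  · intro v hv h
    beta_reduce at h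
    rw [dif_pos hv] at h
    obtain ⟨i, hi⟩ := hg0 ⟨v, hv⟩
    have hi : g0 ^ i = ⟨v, hv⟩ := hi
    rw [← hi, map_zpow, hφ] at h
    have h2 : z ^ i = 1 := Units.ext h
    rw [hz.zpow_eq_one_iff_dvd, ← ho, orderOf_dvd_iff_zpow_eq_one, hi] at h2
    exact congrArg Subtype.val h2
  · intro v hv
    beta_reduce
    rw [dif_pos hv, ← Units.val_pow_eq_pow_val, ← map_pow, hpow, map_one, Units.val_one]
  · beta_reduce
    rw [dif_pos (Subgroup.mem_zpowers g)]
    have : (φ ⟨g, Subgroup.mem_zpowers g⟩) = z := hφ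
    rw [this]; exact hζ

theorem exists_root' {E : Type} [Field E] [CharZero E] (u : E) (hu : u ≠ 0) (n : ℕ) (hn : 0 < n) : ∃ y : PowerSeries E,
    PowerSeries.constantCoeff y = 1 ∧
      y ^ n * (PowerSeries.C u - PowerSeries.X) = PowerSeries.C u := by
  let f : PowerSeries E := PowerSeries.binomialSeries E (-(1 / n) : ℚ)
  have h1 : ∀ m : ℕ, f ^ m = PowerSeries.binomialSeries E (m * (-(1 / n)) : ℚ) := by
    intro m
    induction m with
    | zero => simp
    | succ m ih => rw [pow_succ, ih, ← PowerSeries.binomialSeries_add]; congr 1; push_cast; ring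
  have h2 : f ^ n * (1 + PowerSeries.X) = 1 := by
    have h3 := PowerSeries.binomialSeries_nat (R := ℚ) (A := E) 1
    rw [pow_one] at h3
    have hn' : (n : ℚ) ≠ 0 := by exact_mod_cast hn.ne'
    rw [h1, ← h3, ← PowerSeries.binomialSeries_add]
    have : (n * (-(1 / n)) : ℚ) + ((1 : ℕ) : ℚ) = 0 := by
      field_simp; simp
    rw [this, PowerSeries.binomialSeries_zero]
  refine ⟨PowerSeries.rescale (-u⁻¹) f, ?_, ?_⟩
  · rw [← PowerSeries.coeff_zero_eq_constantCoeff_apply, PowerSeries.coeff_rescale]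
    simp [f]
  · have h4 := congrArg (PowerSeries.rescale (-u⁻¹)) h2
    rw [map_mul, map_pow, map_add, map_one, PowerSeries.rescale_X] at h4
    have h5 : PowerSeries.C u * PowerSeries.C (-u⁻¹) = (-1 : PowerSeries E) := by
      rw [← map_mul, mul_neg, mul_inv_cancel₀ hu, map_neg, map_one]
    linear_combination PowerSeries.C u * h4 - PowerSeries.rescale (-u⁻¹) f ^ n * PowerSeries.X * h5

theorem exists_root [CharZero k] (c : k) (n : ℕ) (hn : 0 < n) : ∃ y : PowerSeries (RatFunc k),
    PowerSeries.constantCoeff y = 1 ∧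
      y ^ n * (PowerSeries.C (uu c) - PowerSeries.X) = PowerSeries.C (uu c) := by
  have : CharZero (RatFunc k) := charZero_of_injective_algebraMap (algebraMap k (RatFunc k)).injective
  exact exists_root' (uu c) (uu_ne_zero c) n hn

theorem exists_LCtx [IsAlgClosed k] [CharZero k] [Finite G] (c : k) (g : G) : ∃ L : LCtx k G, L.c = c ∧ L.g = g := by
  obtain ⟨chi, h1, h2, h3, h4, h5⟩ := exists_chi (k := k) g
  obtain ⟨y, hy, hyn⟩ := exists_root c (orderOf g) (orderOf_pos g)
  exact ⟨⟨c, g, chi, h1, h2, h3, h4, h5, y, y⁻¹, PowerSeries.mul_inv_cancel _ (by simp [hy]), hyn, by simp [hy]⟩, rfl, rfl⟩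

end P7a

section P7b
variable {k : Type} [Field k] {G : Type} [Group G] (L : LCtx k G)

open Classical in
/-- extended character powers -/
noncomputable def XX (j : ℕ) (w : G) : k := if w ∈ Subgroup.zpowers L.g then L.chi w ^ j else 0

theorem XX_mul {j : ℕ} {w : G} (hw : w ∈ Subgroup.zpowers L.g) (v : G) : XX L j (w * v) = XX L j w * XX L j v := by
  by_cases hv : v ∈ Subgroup.zpowers L.g
  · simp [XX, hv, hw, mul_mem hw hv, L.chi_mul w hw v hv, mul_pow]
  · simp [XX, hv, hw, (Subgroup.mul_mem_cancel_left _ hw)]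

theorem XX_mul' {j : ℕ} {v : G} (hv : v ∈ Subgroup.zpowers L.g) (w : G) : XX L j (w * v) = XX L j w * XX L j v := by
  by_cases hw : w ∈ Subgroup.zpowers L.g
  · exact XX_mul L hw v
  · simp [XX, hv, hw, (Subgroup.mul_mem_cancel_right _ hv)]

theorem XX_one (j : ℕ) : XX L j 1 = 1 := by simp [XX, L.chi_one]

theorem XX_eq_zero {j : ℕ} {w : G} (hw : w ∉ Subgroup.zpowers L.g) : XX L j w = 0 := if_neg hw

theorem XX_zero {w : G} (hw : w ∈ Subgroup.zpowers L.g) : XX L 0 w = 1 := by simp [XX, hw]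

theorem XX_add (i j : ℕ) (w : G) : XX L (i + j) w = XX L i w * XX L j w := by
  unfold XX; split_ifs <;> simp [pow_add]

theorem XX_inv_mul {j : ℕ} {w : G} (hw : w ∈ Subgroup.zpowers L.g) : XX L j w⁻¹ * XX L j w = 1 := by
  rw [← XX_mul L (inv_mem hw), inv_mul_cancel, XX_one]

theorem XX_n {w : G} (hw : w ∈ Subgroup.zpowers L.g) : XX L (orderOf L.g) w = 1 := by
  simp [XX, hw, L.chi_pow w hw]

theorem XX_add_n (j : ℕ) (w : G) : XX L (j + orderOf L.g) w = XX L j w := by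
  by_cases hw : w ∈ Subgroup.zpowers L.g
  · rw [XX_add, XX_n L hw, mul_one]
  · simp [XX, hw]

variable [Fintype G]

theorem sum_XX_zero : ∑ w, XX L 0 w = orderOf L.g := by
  classical
  simp only [XX, pow_zero, Finset.sum_boole]
  norm_cast
  rw [← Nat.card_zpowers, Nat.card_eq_fintype_card, Fintype.card_subtype]

theorem orth {i j : ℕ} (hi : i < orderOf L.g) (hj : j < orderOf L.g) (v : G) :
    ∑ w, XX L i w * XX L j (w⁻¹ * v) = if i = j then orderOf L.g * XX L i v else 0 := by
  have hT : ∀ w, XX L i w * XX L j (w⁻¹ * v) = XX L i w * XX L j w⁻¹ * XX L j v := by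
    intro w
    by_cases hw : w ∈ Subgroup.zpowers L.g
    · rw [XX_mul L (inv_mem hw), mul_assoc]
    · simp [XX_eq_zero L hw]
  simp only [hT, ← Finset.sum_mul]
  split_ifs with h
  · subst h
    rw [← sum_XX_zero]
    congr 1
    refine Finset.sum_congr rfl fun w _ => ?_
    by_cases hw : w ∈ Subgroup.zpowers L.g
    · rw [mul_comm, XX_inv_mul L hw, XX_zero L hw]
    · simp [XX_eq_zero L hw]
  · have hg := Subgroup.mem_zpowers L.g
    have hs : ∑ w, XX L i w * XX L j w⁻¹ = XX L i L.g * XX L j L.g⁻¹ * ∑ w, XX L i w * XX L j w⁻¹ := by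
      rw [Finset.mul_sum]
      conv_lhs => rw [← Equiv.sum_comp (Equiv.mulLeft L.g)]
      refine Finset.sum_congr rfl fun w _ => ?_
      simp only [Equiv.coe_mulLeft, mul_inv_rev]
      rw [XX_mul L hg, XX_mul' L (inv_mem hg)]; ring
    have h2 : XX L j L.g * ∑ w, XX L i w * XX L j w⁻¹ = XX L i L.g * ∑ w, XX L i w * XX L j w⁻¹ := by
      have := XX_inv_mul L (j := j) hg
      linear_combination XX L j L.g * hs + XX L i L.g * (∑ w, XX L i w * XX L j w⁻¹) * this
    have h3 : XX L j L.g ≠ XX L i L.g := by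
      simp only [XX, if_pos hg]
      intro h4
      exact h (L.chi_prim.pow_inj hj hi h4).symm
    have h5 : (XX L j L.g - XX L i L.g) * ∑ w, XX L i w * XX L j w⁻¹ = 0 := by
      linear_combination h2
    rcases mul_eq_zero.1 h5 with h6 | h6
    · exact absurd (sub_eq_zero.1 h6) h3
    · rw [h6, zero_mul]

omit [Fintype G] in
open Classical in
theorem sum_XX (v : G) : ∑ i ∈ Finset.range (orderOf L.g), XX L i v = if v = 1 then (orderOf L.g : k) else 0 := by
  split_ifs with h
  · subst h; simp [XX_one]
  · by_cases hv : v ∈ Subgroup.zpowers L.g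
    · simp only [XX, if_pos hv]
      have h1 : L.chi v ≠ 1 := fun h' => h (L.chi_inj v hv h')
      have h2 := mul_geom_sum (L.chi v) (orderOf L.g)
      rw [L.chi_pow v hv, sub_self] at h2
      exact (mul_eq_zero.1 h2).resolve_left (sub_ne_zero.2 h1)
    · simp [XX_eq_zero L hv]

end P7b
end IGP

open Polynomial

namespace IGP

section P8a
variable {k : Type} [Field k] {G : Type} [Group G] [Fintype G]

/-- the local lattice -/
def NN (c : k) (Cm : Matrix G G (PowerSeries (RatFunc k))) (f : G → PowerSeries (RatFunc k)) : Prop :=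
  ∀ h, (Matrix.vecMul f Cm) h ∈ PS (O c)

variable {c : k} {Cm : Matrix G G (PowerSeries (RatFunc k))} {f f' : G → PowerSeries (RatFunc k)}

theorem NN_zero : NN c Cm 0 := fun h => by
  rw [Matrix.zero_vecMul]; exact zero_mem _

theorem NN_add (h : NN c Cm f) (h' : NN c Cm f') : NN c Cm (f + f') := fun l => by
  rw [Matrix.add_vecMul]; exact add_mem (h l) (h' l)

theorem NN_smul (q : QQ c) (h : NN c Cm f) : NN c Cm (io c q • f) := fun l => by
  rw [Matrix.smul_vecMul]; exact mul_mem (io_mem c q) (h l)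

theorem NN_sum {ι : Type} (s : Finset ι) (f : ι → G → PowerSeries (RatFunc k)) (h : ∀ i ∈ s, NN c Cm (f i)) :
    NN c Cm (∑ i ∈ s, f i) := by
  classical
  induction s using Finset.induction_on with
  | empty => simpa using NN_zero
  | insert a s ha ih =>
    rw [Finset.sum_insert ha]
    exact NN_add (h _ (Finset.mem_insert_self _ _)) (ih fun i hi => h i (Finset.mem_insert_of_mem hi))

theorem NN_shift (he : ∀ s h l, Cm (s * h) (s * l) = Cm h l) (s : G) (h : NN c Cm f) :
    NN c Cm (fun l => f (s * l)) := by
  intro l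
  have : Matrix.vecMul (fun l => f (s * l)) Cm l = Matrix.vecMul f Cm (s * l) := by
    simp only [Matrix.vecMul, dotProduct]
    conv_rhs => rw [← Equiv.sum_comp (Equiv.mulLeft s)]
    simp [he]
  rw [this]; exact h _

/-- evaluation extended by junk -/
noncomputable def evP (c : k) (f : PowerSeries (RatFunc k)) : PowerSeries k :=
  open Classical in if h : ∃ q, io c q = f then evW c h.choose else 0

theorem evP_io (q : QQ c) : evP c (io c q) = evW c q := by
  have h : ∃ q', io c q' = io c q := ⟨q, rfl⟩
  rw [evP, dif_pos h]
  congr 1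
  exact io_inj c h.choose_spec

theorem evP_add {f f' : PowerSeries (RatFunc k)} (h : f ∈ PS (O c)) (h' : f' ∈ PS (O c)) :
    evP c (f + f') = evP c f + evP c f' := by
  obtain ⟨q, rfl⟩ := exists_io h
  obtain ⟨q', rfl⟩ := exists_io h'
  simp only [← map_add, evP_io]

theorem evP_mul (q : QQ c) {f' : PowerSeries (RatFunc k)} (h' : f' ∈ PS (O c)) :
    evP c (io c q * f') = evW c q * evP c f' := by
  obtain ⟨q', rfl⟩ := exists_io h'
  simp only [← map_mul, evP_io]

/-- lift of constants series -/
noncomputable def Lam : PowerSeries k →+* PowerSeries (RatFunc k) := JJ.comp C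

theorem Lam_eq (c : k) (w : PowerSeries k) : Lam w = io c (Jq c (C w)) := by
  rw [io_Jq]; rfl

/-- the local facts -/
structure LF (c : k) (g : G) (D : QQ c) [DecidableEq G] where
  Cm : Matrix G G (PowerSeries (RatFunc k))
  one_mod : Cm.map (PowerSeries.constantCoeff (R := RatFunc k)) = 1
  equi : ∀ s h l, Cm (s * h) (s * l) = Cm h l
  mul : ∀ f f', NN c Cm f → NN c Cm f' → NN c Cm (io c D • (f * f'))
  one : NN c Cm 1
  ell : (G → PowerSeries (RatFunc k)) → PowerSeries k
  ell_add : ∀ f f', NN c Cm f → NN c Cm f' → ell (f + f') = ell f + ell f'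
  ell_smul : ∀ q f, NN c Cm f → ell (io c q • f) = evW c q * ell f
  ell_mul : ∀ f f', NN c Cm f → NN c Cm f' → ell (io c D • (f * f')) = evW c D * ell f * ell f'
  ell_g : ∀ f, NN c Cm f → ell (fun l => f (g⁻¹ * l)) = ell f
  ell_one : ell 1 = 1
  Z : G → PowerSeries (RatFunc k)
  Z' : G → PowerSeries (RatFunc k)
  NZ : NN c Cm Z
  NZ' : NN c Cm Z'
  ZZ' : Z * Z' = io c (uQ c) • 1
  ellZ : ∀ p, ell (fun l => Z (p * l)) = 0
  Znil : ∃ q, ∀ l, (io c D * Z l) ^ orderOf g = io c (uQ c * q)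
  Z1 : g = 1 → Z = io c (uQ c) • 1
  I : G → G → PowerSeries (RatFunc k)
  NI : ∀ p, NN c Cm (I p)
  dec : ∀ f, NN c Cm f → ∃ r s, NN c Cm r ∧ NN c Cm s ∧
    f = (∑ p, Lam (ell (fun l => f (p * l))) • I p) + Z * r + io c (uQ c) • s

end P8a

section P8b
variable {k : Type} [Field k] {G : Type} [Group G] [Fintype G] [DecidableEq G] (L : LCtx k G)

/-- monomials -/
noncomputable def Zm (j : ℕ) (p l : G) : PowerSeries (RatFunc k) := kp (XX L j (p⁻¹ * l)) * L.y ^ j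

/-- transition matrix -/
noncomputable def CC : Matrix G G (PowerSeries (RatFunc k)) := Matrix.of fun p l =>
  kp ((orderOf L.g : k)⁻¹) * ∑ j ∈ Finset.range (orderOf L.g), kp (XX L j (p⁻¹ * l)) * L.y' ^ j

noncomputable def BB : Matrix G G (PowerSeries (RatFunc k)) := Matrix.of fun p l =>
  kp ((orderOf L.g : k)⁻¹) * ∑ j ∈ Finset.range (orderOf L.g), Zm L j p l

variable [CharZero k]

omit [DecidableEq G] in
theorem n_ne_zero : (orderOf L.g : k) ≠ 0 := by exact_mod_cast (orderOf_pos L.g).ne'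

omit [DecidableEq G] in
theorem Zm_CC {j : ℕ} (hj : j < orderOf L.g) (p l : G) :
    Matrix.vecMul (Zm L j p) (CC L) l = kp (XX L j (p⁻¹ * l)) := by
  have hn := n_ne_zero L
  simp only [Matrix.vecMul, dotProduct, CC, Matrix.of_apply, Zm]
  have h1 : ∀ i ∈ Finset.range (orderOf L.g), ∑ m, XX L j (p⁻¹ * m) * XX L i (m⁻¹ * l) =
      if j = i then orderOf L.g * XX L j (p⁻¹ * l) else 0 := by
    intro i hi
    rw [← orth L hj (Finset.mem_range.1 hi), ← Equiv.sum_comp (Equiv.mulLeft p)]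
    refine Finset.sum_congr rfl fun m _ => ?_
    simp [mul_assoc]
  calc _ = kp ((orderOf L.g : k)⁻¹) * ∑ i ∈ Finset.range (orderOf L.g), L.y ^ j * L.y' ^ i *
        kp (∑ m, XX L j (p⁻¹ * m) * XX L i (m⁻¹ * l)) := by
        simp only [map_sum, Finset.mul_sum]
        rw [Finset.sum_comm]
        refine Finset.sum_congr rfl fun i _ => Finset.sum_congr rfl fun m _ => ?_
        rw [map_mul]; ring
    _ = kp ((orderOf L.g : k)⁻¹) * ∑ i ∈ Finset.range (orderOf L.g), L.y ^ j * L.y' ^ i *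
        kp (if j = i then orderOf L.g * XX L j (p⁻¹ * l) else 0) := by
        rw [Finset.sum_congr rfl fun i hi => by rw [h1 i hi]]
    _ = kp ((orderOf L.g : k)⁻¹) * (L.y ^ j * L.y' ^ j * kp (orderOf L.g * XX L j (p⁻¹ * l))) := by
        rw [Finset.sum_eq_single_of_mem j (Finset.mem_range.2 hj)]
        · simp
        · intro b _ hb
          simp [hb.symm]
    _ = _ := by
        rw [← mul_pow, L.hy, one_pow, one_mul, ← map_mul, inv_mul_cancel_left₀ hn]

theorem BC : BB L * CC L = 1 := by
  have hn := n_ne_zero L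
  ext p l : 2
  have h1 : (BB L * CC L) p l = Matrix.vecMul (BB L p) (CC L) l := rfl
  have h2 : BB L p = kp ((orderOf L.g : k)⁻¹) • ∑ j ∈ Finset.range (orderOf L.g), Zm L j p := by
    funext m; simp [BB]
  rw [h1, h2, Matrix.smul_vecMul, Matrix.sum_vecMul]
  simp only [Pi.smul_apply, Finset.sum_apply]
  rw [Finset.sum_congr rfl fun j hj => Zm_CC L (Finset.mem_range.1 hj) p l, ← map_sum, sum_XX, smul_eq_mul, ← map_mul,
    Matrix.one_apply]
  by_cases h : p = l
  · subst h; simp [hn]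
  · rw [if_neg h, if_neg, mul_zero, map_zero]
    rwa [inv_mul_eq_one]

theorem CC_one_mod : (CC L).map (PowerSeries.constantCoeff (R := RatFunc k)) = 1 := by
  have hn := n_ne_zero L
  ext p l : 2
  simp only [CC, Matrix.map_apply, Matrix.of_apply, map_mul, map_sum, map_pow, L.hy', one_pow, mul_one]
  rw [← map_sum, ← map_sum, sum_XX, ← map_mul, ← map_mul, Matrix.one_apply]
  by_cases h : p = l
  · subst h; simp [hn]
  · rw [if_neg h, if_neg, mul_zero, map_zero, map_zero]
    rwa [inv_mul_eq_one]

omit [DecidableEq G] [CharZero k] in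
theorem CC_equi (s h l : G) : CC L (s * h) (s * l) = CC L h l := by
  simp [CC, mul_assoc]

omit [DecidableEq G] in
theorem NZm {j : ℕ} (hj : j < orderOf L.g) (p : G) : NN L.c (CC L) (Zm L j p) := by
  intro l
  rw [Zm_CC L hj, ← io_kq L.c]
  exact io_mem _ _

omit [DecidableEq G] [CharZero k] in
theorem kp_smul (c r : k) (f : G → PowerSeries (RatFunc k)) : kp r • f = io c (kq c r) • f := by rw [io_kq]

theorem N_ind {motive : (G → PowerSeries (RatFunc k)) → Prop} (zero : motive 0)
    (zm : ∀ j < orderOf L.g, ∀ p, motive (Zm L j p))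
    (hadd : ∀ f f', NN L.c (CC L) f → NN L.c (CC L) f' → motive f → motive f' → motive (f + f'))
    (smul : ∀ q f, NN L.c (CC L) f → motive f → motive (io L.c q • f)) (f) (hf : NN L.c (CC L) f) : motive f := by
  have hsum : ∀ {ι : Type} (s : Finset ι) (F : ι → G → PowerSeries (RatFunc k)),
      (∀ i ∈ s, NN L.c (CC L) (F i) ∧ motive (F i)) → motive (∑ i ∈ s, F i) := by
    intro ι s F
    classical
    induction s using Finset.induction_on with
    | empty => intro _; simpa using zero
    | insert a s ha ih =>
      intro h
      rw [Finset.sum_insert ha]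
      exact hadd _ _ (h _ (Finset.mem_insert_self _ _)).1
        (NN_sum _ _ fun i hi => (h i (Finset.mem_insert_of_mem hi)).1) (h _ (Finset.mem_insert_self _ _)).2
        (ih fun i hi => h i (Finset.mem_insert_of_mem hi))
  choose ψ hψ using fun h => exists_io (hf h)
  have h1 : f = Matrix.vecMul (Matrix.vecMul f (CC L)) (BB L) := by
    rw [Matrix.vecMul_vecMul, mul_eq_one_comm.1 (BC L), Matrix.vecMul_one]
  have h2 : f = ∑ p, io L.c (ψ p) • io L.c (kq L.c (orderOf L.g : k)⁻¹) • ∑ j ∈ Finset.range (orderOf L.g), Zm L j p := by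
    conv_lhs => rw [h1]
    funext l
    rw [Matrix.vecMul, dotProduct, Finset.sum_apply]
    refine Finset.sum_congr rfl fun p _ => ?_
    rw [← hψ, io_kq]
    simp [BB]
  have hB : ∀ p, NN L.c (CC L) (∑ j ∈ Finset.range (orderOf L.g), Zm L j p) := fun p =>
    NN_sum _ _ fun j hj => NZm L (Finset.mem_range.1 hj) p
  rw [h2]
  refine hsum _ _ fun p _ => ⟨NN_smul _ (NN_smul _ (hB p)), smul _ _ (NN_smul _ (hB p)) (smul _ _ (hB p) ?_)⟩
  exact hsum _ _ fun j hj => ⟨NZm L (Finset.mem_range.1 hj) p, zm j (Finset.mem_range.1 hj) p⟩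

end P8b
end IGP

open Polynomial

namespace IGP

section P9
variable {k : Type} [Field k] {G : Type} [Group G] [Fintype G] [DecidableEq G] (L : LCtx k G)

omit [Fintype G] [DecidableEq G] in
theorem Zm_mul (i j : ℕ) (p q : G) : Zm L i p * Zm L j q = kp (XX L j (q⁻¹ * p)) • Zm L (i + j) p := by
  funext l
  simp only [Pi.mul_apply, Zm, Pi.smul_apply, smul_eq_mul, pow_add]
  have : XX L i (p⁻¹ * l) * XX L j (q⁻¹ * l) = XX L j (q⁻¹ * p) * XX L (i + j) (p⁻¹ * l) := by
    by_cases hl : p⁻¹ * l ∈ Subgroup.zpowers L.g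
    · have h1 : q⁻¹ * l = (q⁻¹ * p) * (p⁻¹ * l) := by group
      rw [h1, XX_mul' L hl, XX_add]; ring
    · simp [XX_eq_zero L hl]
  have h2 := congrArg kp this
  rw [map_mul, map_mul] at h2
  linear_combination L.y ^ i * L.y ^ j * h2

omit [Fintype G] [DecidableEq G] in
theorem io_uX : io L.c (uQ L.c - PowerSeries.X) = PowerSeries.C (uu L.c) - PowerSeries.X := by
  rw [map_sub, io_uQ]; simp [io]

omit [Fintype G] [DecidableEq G] in
theorem Zm_n (j : ℕ) (p : G) : io L.c (uQ L.c - PowerSeries.X) • Zm L (j + orderOf L.g) p = io L.c (uQ L.c) • Zm L j p := by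
  funext l
  simp only [Zm, Pi.smul_apply, smul_eq_mul, XX_add_n, pow_add, io_uX, io_uQ]
  linear_combination kp (XX L j (p⁻¹ * l)) * L.y ^ j * L.hyn

omit [Fintype G] [DecidableEq G] in
theorem Zm_shift (j : ℕ) (p s : G) : (fun l => Zm L j p (s * l)) = Zm L j (s⁻¹ * p) := by
  funext l; simp [Zm, mul_assoc]

variable [CharZero k]

/-- the local functional -/
noncomputable def ell0 (f : G → PowerSeries (RatFunc k)) : PowerSeries k :=
  ∑ w, PowerSeries.C ((orderOf L.g : k)⁻¹ * XX L 0 w) * evP L.c (Matrix.vecMul f (CC L) w)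

omit [DecidableEq G] [CharZero k] in
theorem ell0_add (f f') (h : NN L.c (CC L) f) (h' : NN L.c (CC L) f') : ell0 L (f + f') = ell0 L f + ell0 L f' := by
  simp only [ell0, ← Finset.sum_add_distrib]
  refine Finset.sum_congr rfl fun w _ => ?_
  rw [Matrix.add_vecMul, Pi.add_apply, evP_add (h w) (h' w), mul_add]

omit [DecidableEq G] [CharZero k] in
theorem ell0_smul (q f) (h : NN L.c (CC L) f) : ell0 L (io L.c q • f) = evW L.c q * ell0 L f := by
  simp only [ell0, Finset.mul_sum]
  refine Finset.sum_congr rfl fun w _ => ?_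
  rw [Matrix.smul_vecMul, Pi.smul_apply, smul_eq_mul, evP_mul q (h w)]; ring

omit [DecidableEq G] [CharZero k] in
theorem ell0_zero : ell0 L 0 = 0 := by
  have := ell0_smul L 0 0 NN_zero
  simpa using this

omit [Fintype G] [DecidableEq G] [CharZero k] in
theorem XX_zero_inv (p : G) : XX L 0 p⁻¹ = XX L 0 p := by
  simp [XX]

omit [DecidableEq G] in
theorem ell0_Zm {j : ℕ} (hj : j < orderOf L.g) (p : G) :
    ell0 L (Zm L j p) = if j = 0 then PowerSeries.C (XX L 0 p) else 0 := by
  have hn := n_ne_zero L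
  have h1 : ∑ w, XX L 0 w * XX L j (p⁻¹ * w) = if j = 0 then (orderOf L.g : k) * XX L 0 p else 0 := by
    have := orth L hj (orderOf_pos L.g) p⁻¹
    have h3 : (if j = 0 then (orderOf L.g : k) * XX L 0 p else 0) = if j = 0 then (orderOf L.g : k) * XX L j p⁻¹ else 0 := by
      split_ifs with h
      · subst h; rw [XX_zero_inv]
      · rfl
    rw [h3, ← this, ← Equiv.sum_comp (Equiv.mulLeft p)]
    refine Finset.sum_congr rfl fun w _ => ?_
    rw [← XX_zero_inv L (w⁻¹ * p⁻¹)]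
    simp [mul_comm]
  have h2 : ell0 L (Zm L j p) = PowerSeries.C ((orderOf L.g : k)⁻¹ * ∑ w, XX L 0 w * XX L j (p⁻¹ * w)) := by
    rw [ell0, Finset.mul_sum, map_sum]
    refine Finset.sum_congr rfl fun w _ => ?_
    rw [Zm_CC L hj, ← io_kq L.c, evP_io, evW_kq, ← map_mul, mul_assoc]
  rw [h2, h1]
  split_ifs
  · rw [inv_mul_cancel_left₀ hn]
  · simp

omit [DecidableEq G] in
theorem NZm2 {m : ℕ} (hm : m < orderOf L.g + orderOf L.g) (p : G) :
    NN L.c (CC L) (io L.c (uQ L.c - PowerSeries.X) • Zm L m p) ∧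
    ell0 L (io L.c (uQ L.c - PowerSeries.X) • Zm L m p) =
      if m = 0 then evW L.c (uQ L.c - PowerSeries.X) * PowerSeries.C (XX L 0 p) else 0 := by
  by_cases h : m < orderOf L.g
  · refine ⟨NN_smul _ (NZm L h p), ?_⟩
    rw [ell0_smul L _ _ (NZm L h p), ell0_Zm L h]
    split_ifs <;> simp
  · obtain ⟨j, rfl⟩ := Nat.exists_eq_add_of_le (not_lt.1 h)
    have hj : j < orderOf L.g := by omega
    have hp := orderOf_pos L.g
    rw [add_comm, Zm_n]
    refine ⟨NN_smul _ (NZm L hj p), ?_⟩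
    rw [ell0_smul L _ _ (NZm L hj p), evW_uQ, zero_mul, if_neg (by omega)]

variable (D' : QQ L.c)

omit [Fintype G] [DecidableEq G] [CharZero k] in
theorem D_Zm_mul (i j : ℕ) (p q : G) : io L.c ((uQ L.c - PowerSeries.X) * D') • (Zm L i p * Zm L j q) =
    io L.c (D' * kq L.c (XX L j (q⁻¹ * p))) • io L.c (uQ L.c - PowerSeries.X) • Zm L (i + j) p := by
  rw [Zm_mul, smul_smul, smul_smul, map_mul, map_mul, io_kq]
  congr 1; ring

theorem N_mul (f f') (hf : NN L.c (CC L) f) (hf' : NN L.c (CC L) f') :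
    NN L.c (CC L) (io L.c ((uQ L.c - PowerSeries.X) * D') • (f * f')) := by
  refine N_ind L (motive := fun f => NN L.c (CC L) (io L.c ((uQ L.c - PowerSeries.X) * D') • (f * f'))) ?_ ?_ ?_ ?_ f hf
  · simpa using NN_zero
  · intro i hi p
    refine N_ind L (motive := fun f' => NN L.c (CC L) (io L.c ((uQ L.c - PowerSeries.X) * D') • (Zm L i p * f'))) ?_ ?_ ?_ ?_ f' hf'
    · simpa using NN_zero
    · intro j hj q
      rw [D_Zm_mul]
      exact NN_smul _ (NZm2 L (by omega) p).1
    · intro f f' _ _ h h'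
      rw [mul_add, smul_add]; exact NN_add h h'
    · intro q f _ h
      rw [mul_smul_comm, smul_comm]; exact NN_smul _ h
  · intro f f' _ _ h h'
    rw [add_mul, smul_add]; exact NN_add h h'
  · intro q f _ h
    rw [smul_mul_assoc, smul_comm]; exact NN_smul _ h

theorem ell0_mul (f f') (hf : NN L.c (CC L) f) (hf' : NN L.c (CC L) f') :
    ell0 L (io L.c ((uQ L.c - PowerSeries.X) * D') • (f * f')) =
      evW L.c ((uQ L.c - PowerSeries.X) * D') * ell0 L f * ell0 L f' := by
  refine N_ind L (motive := fun f => ell0 L (io L.c ((uQ L.c - PowerSeries.X) * D') • (f * f')) =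
      evW L.c ((uQ L.c - PowerSeries.X) * D') * ell0 L f * ell0 L f') ?_ ?_ ?_ ?_ f hf
  · simp [ell0_zero]
  · intro i hi p
    refine N_ind L (motive := fun f' => ell0 L (io L.c ((uQ L.c - PowerSeries.X) * D') • (Zm L i p * f')) =
      evW L.c ((uQ L.c - PowerSeries.X) * D') * ell0 L (Zm L i p) * ell0 L f') ?_ ?_ ?_ ?_ f' hf'
    · simp [ell0_zero]
    · intro j hj q
      have hN := NZm2 L (m := i + j) (by omega) p
      rw [D_Zm_mul, ell0_smul L _ _ hN.1, hN.2, ell0_Zm L hi, ell0_Zm L hj]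
      by_cases h : i = 0 ∧ j = 0
      · obtain ⟨rfl, rfl⟩ := h
        rw [add_zero, if_pos rfl, if_pos rfl, if_pos rfl, map_mul, evW_kq]
        have : XX L 0 (q⁻¹ * p) * XX L 0 p = XX L 0 p * XX L 0 q := by
          by_cases hp : p ∈ Subgroup.zpowers L.g
          · rw [XX_mul' L hp, XX_zero_inv, XX_zero L hp]; ring
          · simp [XX_eq_zero L hp]
        have h2 := congrArg (PowerSeries.C) this
        rw [map_mul, map_mul] at h2
        rw [map_mul]
        linear_combination evW L.c (uQ L.c - PowerSeries.X) * evW L.c D' * h2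
      · rw [if_neg (by omega)]
        rcases not_and_or.1 h with h | h <;> simp [h]
    · intro f f' h1 h1' h h'
      have hz := NZm L hi p
      rw [mul_add, smul_add, ell0_add L _ _ (N_mul L D' _ _ hz h1) (N_mul L D' _ _ hz h1'), h, h', ell0_add L _ _ h1 h1']
      ring
    · intro q f h1 h
      have hz := NZm L hi p
      rw [mul_smul_comm, smul_comm, ell0_smul L _ _ (N_mul L D' _ _ hz h1), h, ell0_smul L _ _ h1]
      ring
  · intro f f1 h1 h1' h h'
    rw [add_mul, smul_add, ell0_add L _ _ (N_mul L D' _ _ h1 hf') (N_mul L D' _ _ h1' hf'), h, h', ell0_add L _ _ h1 h1']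
    ring
  · intro q f h1 h
    rw [smul_mul_assoc, smul_comm, ell0_smul L _ _ (N_mul L D' _ _ h1 hf'), h, ell0_smul L _ _ h1]
    ring

theorem ell0_g (f) (hf : NN L.c (CC L) f) : ell0 L (fun l => f (L.g⁻¹ * l)) = ell0 L f := by
  refine N_ind L (motive := fun f => ell0 L (fun l => f (L.g⁻¹ * l)) = ell0 L f) ?_ ?_ ?_ ?_ f hf
  · rfl
  · intro j hj p
    rw [Zm_shift, ell0_Zm L hj, ell0_Zm L hj, inv_inv, XX_mul L (Subgroup.mem_zpowers _), XX_zero L (Subgroup.mem_zpowers _),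
      one_mul]
  · intro f f' h1 h1' h h'
    have := ell0_add L _ _ (NN_shift (CC_equi L) L.g⁻¹ h1) (NN_shift (CC_equi L) L.g⁻¹ h1')
    rw [h, h', ← ell0_add L _ _ h1 h1'] at this
    exact this
  · intro q f h1 h
    have := ell0_smul L q _ (NN_shift (CC_equi L) L.g⁻¹ h1)
    rw [h, ← ell0_smul L _ _ h1] at this
    exact this

omit [DecidableEq G] in
theorem sum_Zm_zero (l : G) : ∑ p, Zm L 0 p l = kp (orderOf L.g : k) := by
  simp only [Zm, pow_zero, mul_one, ← map_sum]
  rw [← sum_XX_zero L]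
  exact congrArg kp (Equiv.sum_comp ((Equiv.inv G).trans (Equiv.mulRight l)) (XX L 0))

omit [DecidableEq G] in
theorem one_eq : (1 : G → PowerSeries (RatFunc k)) = io L.c (kq L.c (orderOf L.g : k)⁻¹) • ∑ p, Zm L 0 p := by
  funext l
  have hn := n_ne_zero L
  rw [Pi.smul_apply, Finset.sum_apply, sum_Zm_zero, io_kq, smul_eq_mul, ← map_mul, inv_mul_cancel₀ hn, map_one]
  rfl

omit [DecidableEq G] in
theorem ell0_sum {ι : Type} (s : Finset ι) (f : ι → G → PowerSeries (RatFunc k)) (h : ∀ i ∈ s, NN L.c (CC L) (f i)) :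
    ell0 L (∑ i ∈ s, f i) = ∑ i ∈ s, ell0 L (f i) := by
  classical
  induction s using Finset.induction_on with
  | empty => simpa using ell0_zero L
  | insert a s ha ih =>
    have h' : ∀ i ∈ s, NN L.c (CC L) (f i) := fun i hi => h i (Finset.mem_insert_of_mem hi)
    rw [Finset.sum_insert ha, Finset.sum_insert ha, ← ih h',
      ell0_add L _ _ (h _ (Finset.mem_insert_self _ _)) (NN_sum _ _ h')]

omit [DecidableEq G] in
theorem N_one : NN L.c (CC L) 1 := by
  rw [one_eq L]
  exact NN_smul _ (NN_sum _ _ fun p _ => NZm L (orderOf_pos _) p)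

omit [DecidableEq G] in
theorem ell0_one : ell0 L 1 = 1 := by
  have hn := n_ne_zero L
  rw [one_eq L, ell0_smul L _ _ (NN_sum _ _ fun p _ => NZm L (orderOf_pos _) p), ell0_sum L _ _ fun p _ => NZm L (orderOf_pos _) p]
  rw [Finset.sum_congr rfl fun p _ => by rw [ell0_Zm L (orderOf_pos _), if_pos rfl], ← map_sum, sum_XX_zero, evW_kq, ← map_mul,
    inv_mul_cancel₀ hn, map_one]

end P9
end IGP

open Polynomial

namespace IGP

section P10
variable {k : Type} [Field k] {G : Type} [Group G] [Fintype G] [DecidableEq G] (L : LCtx k G)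

/-- coset representative -/
noncomputable def sr (l : G) : G := Quotient.out (QuotientGroup.mk l : G ⧸ Subgroup.zpowers L.g)

omit [Fintype G] [DecidableEq G] in
theorem sr_mem (l : G) : (sr L l)⁻¹ * l ∈ Subgroup.zpowers L.g := by
  rw [← QuotientGroup.eq]
  exact QuotientGroup.out_eq' _

omit [Fintype G] [DecidableEq G] in
theorem sr_eq {q l : G} (h : q⁻¹ * l ∈ Subgroup.zpowers L.g) : sr L q = sr L l := by
  unfold sr
  rw [QuotientGroup.eq.2 h]

/-- powers of the local parameter -/
noncomputable def Zp (j : ℕ) (l : G) : PowerSeries (RatFunc k) := kp (XX L j ((sr L l)⁻¹ * l)) * L.y ^ j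

omit [Fintype G] [DecidableEq G] in
theorem Zp_Zm (j : ℕ) (q : G) : Zp L 1 * Zm L j q = kp (XX L 1 ((sr L q)⁻¹ * q)) • Zm L (j + 1) q := by
  funext l
  simp only [Pi.mul_apply, Zm, Zp, Pi.smul_apply, smul_eq_mul]
  have : XX L 1 ((sr L l)⁻¹ * l) * XX L j (q⁻¹ * l) = XX L 1 ((sr L q)⁻¹ * q) * XX L (j + 1) (q⁻¹ * l) := by
    by_cases hl : q⁻¹ * l ∈ Subgroup.zpowers L.g
    · have h1 : (sr L l)⁻¹ * l = ((sr L q)⁻¹ * q) * (q⁻¹ * l) := by rw [sr_eq L hl]; group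
      rw [h1, XX_mul' L hl, XX_add]; ring
    · simp [XX_eq_zero L hl]
  have h2 := congrArg kp this
  rw [map_mul, map_mul] at h2
  linear_combination L.y ^ j * L.y * h2

omit [Fintype G] [DecidableEq G] in
theorem Zp_pow (j : ℕ) (l : G) : Zp L 1 l ^ j = Zp L j l := by
  simp [Zp, mul_pow, XX, sr_mem, ← map_pow]

variable [CharZero k]

omit [DecidableEq G] in
theorem Zp_eq (j : ℕ) : Zp L j = io L.c (kq L.c (orderOf L.g : k)⁻¹) •
    ∑ q, io L.c (kq L.c (XX L j ((sr L q)⁻¹ * q))) • Zm L j q := by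
  funext l
  have hn := n_ne_zero L
  have hs : ∑ q, XX L j ((sr L q)⁻¹ * q) * XX L j (q⁻¹ * l) = XX L j ((sr L l)⁻¹ * l) * orderOf L.g := by
    rw [← sum_XX_zero L, ← Equiv.sum_comp ((Equiv.inv G).trans (Equiv.mulRight l)) (XX L 0), Finset.mul_sum]
    refine Finset.sum_congr rfl fun q _ => ?_
    simp only [Equiv.trans_apply, Equiv.inv_apply, Equiv.coe_mulRight]
    by_cases hl : q⁻¹ * l ∈ Subgroup.zpowers L.g
    · have h1 : (sr L l)⁻¹ * l = ((sr L q)⁻¹ * q) * (q⁻¹ * l) := by rw [sr_eq L hl]; group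
      rw [h1, XX_mul' L hl, XX_zero L hl, mul_one]
    · simp [XX_eq_zero L hl]
  simp only [Pi.smul_apply, Finset.sum_apply, smul_eq_mul, io_kq, Zm, Zp, ← mul_assoc, ← map_mul, ← Finset.sum_mul, ← map_sum]
  rw [hs, mul_comm (XX L j _), inv_mul_cancel_left₀ hn]

omit [DecidableEq G] in
theorem NZp {j : ℕ} (hj : j < orderOf L.g) : NN L.c (CC L) (Zp L j) := by
  rw [Zp_eq]
  exact NN_smul _ (NN_sum _ _ fun q _ => NN_smul _ (NZm L hj q))

omit [DecidableEq G] in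
theorem ell0_Zp (h1 : 1 < orderOf L.g) (p : G) : ell0 L (fun l => Zp L 1 (p * l)) = 0 := by
  have : (fun l => Zp L 1 (p * l)) = io L.c (kq L.c (orderOf L.g : k)⁻¹) •
      ∑ q, io L.c (kq L.c (XX L 1 ((sr L q)⁻¹ * q))) • Zm L 1 (p⁻¹ * q) := by
    rw [Zp_eq]
    funext l
    simp only [Pi.smul_apply, Finset.sum_apply, ← Zm_shift]
  rw [this, ell0_smul L _ _ (NN_sum _ _ fun q _ => NN_smul _ (NZm L h1 _)), ell0_sum L _ _ fun q _ => NN_smul _ (NZm L h1 _)]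
  rw [Finset.sum_eq_zero, mul_zero]
  intro q _
  rw [ell0_smul L _ _ (NZm L h1 _), ell0_Zm L h1]; simp

omit [DecidableEq G] in
theorem exists_Z (D' : QQ L.c) : ∃ Z Z' : G → PowerSeries (RatFunc k), NN L.c (CC L) Z ∧ NN L.c (CC L) Z' ∧
    Z * Z' = io L.c (uQ L.c) • 1 ∧ (∀ p, ell0 L (fun l => Z (p * l)) = 0) ∧
    (∃ q, ∀ l, (io L.c ((uQ L.c - PowerSeries.X) * D') * Z l) ^ orderOf L.g = io L.c (uQ L.c * q)) ∧
    (L.g = 1 → Z = io L.c (uQ L.c) • 1) ∧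
    ∀ j, 0 < j → j < orderOf L.g → ∀ q, ∃ r, NN L.c (CC L) r ∧ Zm L j q = Z * r := by
  by_cases hg : L.g = 1
  · have ho : orderOf L.g = 1 := by rw [hg, orderOf_one]
    refine ⟨io L.c (uQ L.c) • 1, 1, NN_smul _ (N_one L), N_one L, by simp, ?_, ?_, fun _ => rfl, ?_⟩
    · intro p
      have := ell0_smul L (uQ L.c) 1 (N_one L)
      rw [evW_uQ, zero_mul] at this
      exact this
    · refine ⟨(uQ L.c - PowerSeries.X) * D', fun l => ?_⟩
      rw [ho, pow_one, Pi.smul_apply, Pi.one_apply, smul_eq_mul, mul_one, ← map_mul, mul_comm]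
    · intro j h1 h2; omega
  · have ho : 1 < orderOf L.g := by
      have h1 := orderOf_pos L.g
      have h2 : orderOf L.g ≠ 1 := fun h => hg (orderOf_eq_one_iff.1 h)
      omega
    have hyl : ∀ l, Zp L 1 l ^ orderOf L.g = L.y ^ orderOf L.g := by
      intro l
      rw [Zp_pow, Zp, XX_n L (sr_mem L l), map_one, one_mul]
    refine ⟨Zp L 1, io L.c (uQ L.c - PowerSeries.X) • Zp L (orderOf L.g - 1), NZp L ho, NN_smul _ (NZp L (by omega)), ?_,
      ell0_Zp L ho, ?_, fun h => absurd h hg, ?_⟩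
    · funext l
      have h1 : Zp L 1 l * Zp L (orderOf L.g - 1) l = L.y ^ orderOf L.g := by
        rw [← hyl l, ← Zp_pow L (orderOf L.g - 1), ← pow_succ', Nat.sub_add_cancel ho.le]
      simp only [Pi.mul_apply, Pi.smul_apply, Pi.one_apply, smul_eq_mul, mul_one, io_uX, io_uQ]
      have h5 := L.hyn
      rw [← h1] at h5
      linear_combination h5
    · refine ⟨(uQ L.c - PowerSeries.X) ^ (orderOf L.g - 1) * D' ^ orderOf L.g, fun l => ?_⟩
      have h3 : (io L.c (uQ L.c - PowerSeries.X)) ^ orderOf L.g =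
          (io L.c (uQ L.c - PowerSeries.X)) ^ (orderOf L.g - 1) * io L.c (uQ L.c - PowerSeries.X) := by
        rw [← pow_succ, Nat.sub_add_cancel ho.le]
      have h4 := L.hyn
      rw [← io_uX, ← io_uQ] at h4
      rw [mul_pow, hyl, map_mul, mul_pow, h3, map_mul, map_mul, map_pow, map_pow]
      linear_combination io L.c (uQ L.c - PowerSeries.X) ^ (orderOf L.g - 1) * io L.c D' ^ orderOf L.g * h4
    · intro j h1 h2 q
      refine ⟨io L.c (kq L.c (XX L 1 ((sr L q)⁻¹ * q)⁻¹)) • Zm L (j - 1) q, NN_smul _ (NZm L (by omega) q), ?_⟩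
      rw [mul_smul_comm, Zp_Zm, Nat.sub_add_cancel h1, io_kq, smul_smul, ← map_mul, XX_inv_mul L (sr_mem L q), map_one, one_smul]

theorem exists_dec (Z : G → PowerSeries (RatFunc k))
    (hZ : ∀ j, 0 < j → j < orderOf L.g → ∀ q, ∃ r, NN L.c (CC L) r ∧ Zm L j q = Z * r)
    (f) (hf : NN L.c (CC L) f) : ∃ r s, NN L.c (CC L) r ∧ NN L.c (CC L) s ∧
    f = (∑ p, Lam (ell0 L (fun l => f (p * l))) • io L.c (kq L.c (orderOf L.g : k)⁻¹) • Zm L 0 p) + Z * r + io L.c (uQ L.c) • s := by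
  have hn := n_ne_zero L
  have hsh : ∀ {f} (p : G), NN L.c (CC L) f → NN L.c (CC L) (fun l => f (p * l)) := fun p h =>
    NN_shift (CC_equi L) p h
  refine N_ind L (motive := fun f => ∃ r s, NN L.c (CC L) r ∧ NN L.c (CC L) s ∧
    f = (∑ p, Lam (ell0 L (fun l => f (p * l))) • io L.c (kq L.c (orderOf L.g : k)⁻¹) • Zm L 0 p) + Z * r + io L.c (uQ L.c) • s)
    ?_ ?_ ?_ ?_ f hf
  · refine ⟨0, 0, NN_zero, NN_zero, ?_⟩
    have : ell0 L (fun l => (0 : G → PowerSeries (RatFunc k)) l) = 0 := ell0_zero L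
    simp only [Pi.zero_apply] at this
    simp [this]
  · intro j hj q
    rcases Nat.eq_zero_or_pos j with rfl | hj0
    · refine ⟨0, 0, NN_zero, NN_zero, ?_⟩
      funext l
      simp only [Zm_shift, ell0_Zm L hj, if_true, mul_zero, smul_zero, add_zero, Finset.sum_apply, Pi.smul_apply, smul_eq_mul]
      have hL : ∀ r : k, Lam (PowerSeries.C r) = kp r := by
        intro r; simp [Lam, JJ, kp]
      simp only [hL, io_kq, Zm, pow_zero, mul_one, ← map_mul, ← map_sum]
      congr 1
      have : ∀ p, XX L 0 (p⁻¹ * q) * ((orderOf L.g : k)⁻¹ * XX L 0 (p⁻¹ * l)) =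
          (orderOf L.g : k)⁻¹ * XX L 0 (q⁻¹ * l) * XX L 0 (p⁻¹ * q) := by
        intro p
        by_cases h : p⁻¹ * q ∈ Subgroup.zpowers L.g
        · have h1 : p⁻¹ * l = (p⁻¹ * q) * (q⁻¹ * l) := by group
          rw [h1, XX_mul L h, XX_zero L h]; ring
        · simp [XX_eq_zero L h]
      simp only [this, ← Finset.mul_sum]
      have h2 := Equiv.sum_comp ((Equiv.inv G).trans (Equiv.mulRight q)) (XX L 0)
      simp only [Equiv.trans_apply, Equiv.inv_apply, Equiv.coe_mulRight] at h2
      rw [h2, sum_XX_zero]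
      field_simp
    · obtain ⟨r, hr, h⟩ := hZ j hj0 hj q
      refine ⟨r, 0, hr, NN_zero, ?_⟩
      simp only [Zm_shift, ell0_Zm L hj, if_neg hj0.ne', map_zero, zero_smul, Finset.sum_const_zero, zero_add, smul_zero, add_zero]
      exact h
  · rintro f f' h1 h1' ⟨r, s, hr, hs, h⟩ ⟨r', s', hr', hs', h'⟩
    refine ⟨r + r', s + s', NN_add hr hr', NN_add hs hs', ?_⟩
    have : ∀ p : G, ell0 L (fun l => (f + f') (p * l)) = ell0 L (fun l => f (p * l)) + ell0 L (fun l => f' (p * l)) := fun p =>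
      ell0_add L _ _ (hsh p h1) (hsh p h1')
    simp only [this, map_add, add_smul, Finset.sum_add_distrib]
    conv_lhs => rw [h, h']
    rw [mul_add, smul_add]
    abel
  · rintro q f h1 ⟨r, s, hr, hs, h⟩
    have : ∀ p : G, ell0 L (fun l => (io L.c q • f) (p * l)) = evW L.c q * ell0 L (fun l => f (p * l)) := fun p =>
      ell0_smul L q _ (hsh p h1)
    have h0 : evW L.c (q - Jq L.c (C (evW L.c q))) = 0 := by
      rw [map_sub, evW_Jq]; simp
    obtain ⟨t, ht⟩ := exists_eq_uQ_mul _ h0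
    have ht' : io L.c q = Lam (evW L.c q) + io L.c (uQ L.c) * io L.c t := by
      rw [Lam_eq L.c, ← map_mul, ← map_add, ← ht]; ring_nf
    refine ⟨io L.c q • r, io L.c q • s + io L.c t • ∑ p, Lam (ell0 L (fun l => f (p * l))) • io L.c (kq L.c (orderOf L.g : k)⁻¹) • Zm L 0 p,
      NN_smul _ hr, NN_add (NN_smul _ hs) (NN_smul _ (NN_sum _ _ fun p _ => ?_)), ?_⟩
    · rw [Lam_eq L.c]
      exact NN_smul _ (NN_smul _ (NZm L (orderOf_pos _) p))
    · simp only [this, map_mul, mul_smul, ← Finset.smul_sum]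
      generalize (∑ p, Lam (ell0 L (fun l => f (p * l))) • io L.c (kq L.c (orderOf L.g : k)⁻¹) • Zm L 0 p) = S at h ⊢
      funext l
      have hl := congrFun h l
      simp only [Pi.add_apply, Pi.smul_apply, Pi.mul_apply, smul_eq_mul] at hl ⊢
      linear_combination io L.c q * hl + S l * ht'

noncomputable def mkLF (D' : QQ L.c) : LF L.c L.g ((uQ L.c - PowerSeries.X) * D') :=
  have h := (exists_Z L D').choose_spec.choose_spec
  { Cm := CC L
    one_mod := CC_one_mod L
    equi := CC_equi L
    mul := N_mul L D'
    one := N_one L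
    ell := ell0 L
    ell_add := ell0_add L
    ell_smul := ell0_smul L
    ell_mul := ell0_mul L D'
    ell_g := ell0_g L
    ell_one := ell0_one L
    Z := (exists_Z L D').choose
    Z' := (exists_Z L D').choose_spec.choose
    NZ := h.1
    NZ' := h.2.1
    ZZ' := h.2.2.1
    ellZ := h.2.2.2.1
    Znil := h.2.2.2.2.1
    Z1 := h.2.2.2.2.2.1
    I := fun p => io L.c (kq L.c (orderOf L.g : k)⁻¹) • Zm L 0 p
    NI := fun p => NN_smul _ (NZm L (orderOf_pos _) p)
    dec := exists_dec L _ h.2.2.2.2.2.2 }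

theorem exists_LF [IsAlgClosed k] (c : k) (g : G) (D' : QQ c) : Nonempty (LF c g ((uQ c - PowerSeries.X) * D')) := by
  obtain ⟨L, rfl, rfl⟩ := exists_LCtx c g
  exact ⟨mkLF L D'⟩

end P10
end IGP

open Polynomial

namespace IGP

section P11
variable {k : Type} [Field k] {G : Type} [Group G] [Fintype G] [DecidableEq G]

/-- chosen principal part -/
noncomputable def pp (c : k) (f : RatFunc k) : RatFunc k := (exists_pp c f).choose

theorem sub_pp_mem (c : k) (f : RatFunc k) : f - pp c f ∈ O c := (exists_pp c f).choose_spec.1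
theorem pp_mem {b c : k} (h : b ≠ c) (f : RatFunc k) : pp c f ∈ O b := (exists_pp c f).choose_spec.2.1 b h
theorem pp_inf (c : k) (f : RatFunc k) : pp c f ∈ Oinf k := (exists_pp c f).choose_spec.2.2

variable (a : G → k) (Cm : G → Matrix G G (PowerSeries (RatFunc k)))

/-- coefficients of the global generator -/
noncomputable def vv (n : ℕ) : G → RatFunc k :=
  if n = 0 then Pi.single 1 1 else
  fun h => - ∑ i, pp (a i) (∑ m : Fin n, ∑ l, vv m l * PowerSeries.coeff (n - m) (Cm i l h))
termination_by n
decreasing_by exact m.2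

/-- lower-order part -/
noncomputable def SS (n : ℕ) (i h : G) : RatFunc k :=
  ∑ m : Fin n, ∑ l, vv a Cm m l * PowerSeries.coeff (n - m) (Cm i l h)

theorem vv_zero : vv a Cm 0 = Pi.single 1 1 := by rw [vv]; simp

theorem vv_pos {n : ℕ} (hn : n ≠ 0) (h : G) : vv a Cm n h = - ∑ i, pp (a i) (SS a Cm n i h) := by
  rw [vv, if_neg hn]; rfl

/-- the global generator -/
noncomputable def theta (h : G) : PowerSeries (RatFunc k) := PowerSeries.mk fun n => vv a Cm n h

theorem theta_const (h : G) : PowerSeries.constantCoeff (theta a Cm h) = if h = 1 then 1 else 0 := by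
  rw [← PowerSeries.coeff_zero_eq_constantCoeff_apply, theta, PowerSeries.coeff_mk, vv_zero, Pi.single_apply]

theorem theta_mem (S : Subring (RatFunc k)) (hS : ∀ i f, pp (a i) f ∈ S) (h : G) : theta a Cm h ∈ PS S := by
  rw [mem_PS]
  intro n
  rw [theta, PowerSeries.coeff_mk]
  by_cases hn : n = 0
  · rw [hn, vv_zero, Pi.single_apply]
    split_ifs
    · exact one_mem _
    · exact zero_mem _
  · rw [vv_pos a Cm hn]
    exact neg_mem (sum_mem fun i _ => hS i _)

theorem theta_NN (ha : Function.Injective a) (h1 : ∀ i, (Cm i).map (PowerSeries.constantCoeff (R := RatFunc k)) = 1)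
    (i : G) : NN (a i) (Cm i) (theta a Cm) := by
  intro h
  rw [mem_PS]
  intro n
  have h2 : ∀ l, PowerSeries.constantCoeff (Cm i l h) = if l = h then 1 else 0 := by
    intro l
    have := congrFun (congrFun (h1 i) l) h
    rw [Matrix.map_apply, Matrix.one_apply] at this
    exact this
  have key : PowerSeries.coeff n (Matrix.vecMul (theta a Cm) (Cm i) h) = SS a Cm n i h + vv a Cm n h := by
    simp only [Matrix.vecMul, dotProduct, map_sum, PowerSeries.coeff_mul, theta, PowerSeries.coeff_mk]
    simp only [Finset.Nat.sum_antidiagonal_eq_sum_range_succ_mk, Finset.sum_range_succ, Finset.sum_add_distrib]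
    congr 1
    · rw [Finset.sum_comm, SS, Finset.sum_range]
    · simp [h2]
  rw [key]
  by_cases hn : n = 0
  · subst hn
    rw [SS, vv_zero, Pi.single_apply]
    simp only [Finset.univ_eq_empty, Finset.sum_empty, zero_add]
    split_ifs
    · exact one_mem _
    · exact zero_mem _
  · rw [vv_pos a Cm hn, ← Finset.add_sum_erase _ _ (Finset.mem_univ i), ← sub_eq_add_neg, ← sub_sub]
    refine sub_mem (sub_pp_mem (a i) (SS a Cm n i h)) (sum_mem fun j hj => ?_)
    have hne : a i ≠ a j := fun he => (Finset.ne_of_mem_erase hj) (ha he).symm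
    exact pp_mem hne _

end P11

section P11b
variable {k : Type} [Field k] {G : Type} [Group G] [Fintype G] [DecidableEq G]

theorem exists_lift (S : Subring (RatFunc k)) {f : PowerSeries (RatFunc k)} (hf : f ∈ PS S) :
    ∃ q : PowerSeries S, PowerSeries.map S.subtype q = f := by
  rw [mem_PS] at hf
  refine ⟨PowerSeries.mk fun n => ⟨_, hf n⟩, ?_⟩
  ext n
  simp

theorem map_mem_PS (S : Subring (RatFunc k)) (q : PowerSeries S) : PowerSeries.map S.subtype q ∈ PS S := by
  rw [mem_PS]; intro n; simp

theorem coords (S : Subring (RatFunc k)) (M : Matrix G G (PowerSeries (RatFunc k))) (hM : ∀ i j, M i j ∈ PS S)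
    (h1 : M.map (PowerSeries.constantCoeff (R := RatFunc k)) = 1)
    (f : G → PowerSeries (RatFunc k)) (hf : ∀ i, f i ∈ PS S) :
    ∃ q : G → PowerSeries (RatFunc k), (∀ i, q i ∈ PS S) ∧ Matrix.vecMul q M = f := by
  choose f' hf' using fun i => exists_lift S (hf i)
  choose M' hM' using fun i j => exists_lift S (hM i j)
  have hu : IsUnit (Matrix.of M') := by
    apply isUnit_mat
    ext i j
    have := congrFun (congrFun h1 i) j
    rw [Matrix.map_apply, ← hM', Matrix.one_apply] at this
    rw [Matrix.map_apply, Matrix.of_apply, Matrix.one_apply]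
    have h3 : S.subtype (PowerSeries.constantCoeff (M' i j)) = if i = j then 1 else 0 := by
      rw [← this]
      rw [← PowerSeries.coeff_zero_eq_constantCoeff_apply, ← PowerSeries.coeff_zero_eq_constantCoeff_apply, PowerSeries.coeff_map]
    rw [Subring.subtype_apply] at h3
    rw [h3]; split_ifs <;> simp
  obtain ⟨U, hU⟩ := hu
  refine ⟨fun i => PowerSeries.map S.subtype (Matrix.vecMul f' (↑U⁻¹ : Matrix G G (PowerSeries S)) i), fun i => map_mem_PS _ _, ?_⟩
  have h2 : Matrix.vecMul (Matrix.vecMul f' (↑U⁻¹ : Matrix G G (PowerSeries S))) (Matrix.of M') = f' := by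
    rw [Matrix.vecMul_vecMul, ← hU, Units.inv_mul, Matrix.vecMul_one]
  funext j
  rw [← hf' j]
  conv_rhs => rw [← h2]
  simp only [Matrix.vecMul, dotProduct, map_sum, map_mul, Matrix.of_apply, hM']

theorem coordsN {c : k} {Cm T : Matrix G G (PowerSeries (RatFunc k))}
    (hC : Cm.map (PowerSeries.constantCoeff (R := RatFunc k)) = 1)
    (hT : T.map (PowerSeries.constantCoeff (R := RatFunc k)) = 1)
    (hN : ∀ h, NN c Cm (T h)) {f : G → PowerSeries (RatFunc k)} (hf : NN c Cm f) :
    ∃ q : G → PowerSeries (RatFunc k), (∀ i, q i ∈ PS (O c)) ∧ Matrix.vecMul q T = f := by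
  obtain ⟨q, hq, h⟩ := coords (O c) (T * Cm) (fun i j => hN i j) (by
    rw [Matrix.map_mul, hC, hT, one_mul]) _ hf
  refine ⟨q, hq, ?_⟩
  obtain ⟨U, hU⟩ := isUnit_mat Cm hC
  rw [← Matrix.vecMul_vecMul] at h
  have := congrArg (fun v => Matrix.vecMul v (↑U⁻¹ : Matrix G G (PowerSeries (RatFunc k)))) h
  simpa only [Matrix.vecMul_vecMul, ← hU, mul_assoc, Units.mul_inv, mul_one, Matrix.vecMul_one] using this

end P11b
end IGP

open Polynomial

namespace IGP

section P12
variable {k : Type} [Field k] {G : Type} [Group G] [Fintype G] [DecidableEq G]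

/-- the polynomial D over power series -/
noncomputable def Dp (a : G → k) : (PowerSeries k)[X] := DD PowerSeries.X (fun g => PowerSeries.C (a g))

omit [Group G] in
theorem Jq_Dp (a : G → k) (g : G) : ∃ D', Jq (a g) (Dp a) = (uQ (a g) - PowerSeries.X) * D' := by
  refine ⟨Jq (a g) (∏ j ∈ Finset.univ.erase g, (X - C (PowerSeries.C (a j) + PowerSeries.X))), ?_⟩
  rw [Dp, DD, ← Finset.mul_prod_erase _ _ (Finset.mem_univ g), map_mul]
  congr 1
  rw [C_add, ← sub_sub, map_sub, Jq_sub]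
  simp [Jq]

/-- the global context -/
structure GC (k G : Type) [Field k] [Group G] [Fintype G] [DecidableEq G] where
  a : G → k
  ha : Function.Injective a
  L : ∀ g, LF (a g) g (Jq (a g) (Dp a))

theorem exists_GC [IsAlgClosed k] [CharZero k] (a : G → k) (ha : Function.Injective a) : ∃ K : GC k G, K.a = a := by
  have : ∀ g, Nonempty (LF (a g) g (Jq (a g) (Dp a))) := by
    intro g
    obtain ⟨D', h⟩ := Jq_Dp a g
    rw [h]
    exact exists_LF _ _ _
  exact ⟨⟨a, ha, fun g => (this g).some⟩, rfl⟩

variable (K : GC k G)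

/-- the matrix of translates of the generator -/
noncomputable def TT : Matrix G G (PowerSeries (RatFunc k)) :=
  Matrix.of fun h l => theta K.a (fun g => (K.L g).Cm) (h⁻¹ * l)

theorem TT_shift (s h l : G) : TT K (s * h) (s * l) = TT K h l := by
  simp [TT, mul_assoc]

theorem TT_shift' (s h l : G) : TT K h (s * l) = TT K (s⁻¹ * h) l := by
  rw [← TT_shift K s (s⁻¹ * h)]; simp

theorem TT_const : (TT K).map (PowerSeries.constantCoeff (R := RatFunc k)) = 1 := by
  ext h l : 2
  simp [TT, theta_const, Matrix.one_apply, inv_mul_eq_one]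

theorem TT_row (h : G) : TT K h = fun l => theta K.a (fun g => (K.L g).Cm) (h⁻¹ * l) := rfl

theorem TT_NN (g h : G) : NN (K.a g) (K.L g).Cm (TT K h) := by
  have h0 : NN (K.a g) (K.L g).Cm (theta K.a (fun g => (K.L g).Cm)) :=
    theta_NN K.a (fun g => (K.L g).Cm) K.ha (fun i => (K.L i).one_mod) g
  rw [TT_row]
  exact NN_shift (K.L g).equi h⁻¹ h0

theorem TT_O {c : k} (hc : ∀ g, c ≠ K.a g) (h l : G) : TT K h l ∈ PS (O c) :=
  theta_mem _ _ _ (fun i _ => pp_mem (hc i) _) _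

theorem TT_inf (h l : G) : TT K h l ∈ PS (Oinf k) :=
  theta_mem _ _ _ (fun i _ => pp_inf _ _) _

/-- the map from coordinates to functions -/
noncomputable def Phi (p : G → (PowerSeries k)[X]) (l : G) : PowerSeries (RatFunc k) := ∑ h, JJ (p h) * TT K h l

theorem Phi_eq (p : G → (PowerSeries k)[X]) : Phi K p = Matrix.vecMul (fun h => JJ (p h)) (TT K) := rfl

theorem Phi_eq' (c : k) (p : G → (PowerSeries k)[X]) : Phi K p = ∑ h, io c (Jq c (p h)) • TT K h := by
  funext l
  simp [Phi, io_Jq]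

theorem T_inj {q q' : G → PowerSeries (RatFunc k)} (h : Matrix.vecMul q (TT K) = Matrix.vecMul q' (TT K)) : q = q' := by
  obtain ⟨U, hU⟩ := isUnit_mat (TT K) (TT_const K)
  have := congrArg (fun v => Matrix.vecMul v (↑U⁻¹ : Matrix G G (PowerSeries (RatFunc k)))) h
  simpa only [Matrix.vecMul_vecMul, ← hU, Units.mul_inv, Matrix.vecMul_one] using this

theorem Phi_inj {p p' : G → (PowerSeries k)[X]} (h : Phi K p = Phi K p') : p = p' := by
  have := T_inj K h
  funext l
  exact JJ_inj (congrFun this l)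

theorem Phi_NN (g : G) (p : G → (PowerSeries k)[X]) : NN (K.a g) (K.L g).Cm (Phi K p) := by
  rw [Phi_eq' K (K.a g)]
  exact NN_sum _ _ fun h _ => NN_smul _ (TT_NN K g h)

theorem Phi_surj [IsAlgClosed k] (f : G → PowerSeries (RatFunc k)) (h1 : ∀ g, NN (K.a g) (K.L g).Cm f)
    (h2 : ∀ c, (∀ g, c ≠ K.a g) → ∀ l, f l ∈ PS (O c)) (m : ℕ)
    (h3 : ∀ l, PowerSeries.C (RatFunc.X⁻¹ ^ m) * f l ∈ PS (Oinf k)) : ∃ p, Phi K p = f := by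
  obtain ⟨U, hU⟩ := isUnit_mat (TT K) (TT_const K)
  obtain ⟨q, hq⟩ : ∃ q, Matrix.vecMul q (TT K) = f :=
    ⟨Matrix.vecMul f (↑U⁻¹ : Matrix G G (PowerSeries (RatFunc k))), by
      rw [Matrix.vecMul_vecMul, ← hU, Units.inv_mul, Matrix.vecMul_one]⟩
  have h : ∀ l, ∃ p, JJ p = q l := by
    intro l
    refine exists_JJ _ (fun c => ?_) m ?_
    · by_cases hc : ∀ g, c ≠ K.a g
      · obtain ⟨q', h, h'⟩ := coords (O c) (TT K) (TT_O K hc) (TT_const K) f (h2 c hc)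
        rw [T_inj K (hq.trans h'.symm)]
        exact h l
      · push Not at hc
        obtain ⟨g, rfl⟩ := hc
        obtain ⟨q', h, h'⟩ := coordsN (K.L g).one_mod (TT_const K) (TT_NN K g) (h1 g)
        rw [T_inj K (hq.trans h'.symm)]
        exact h l
    · obtain ⟨q', h, h'⟩ := coords (Oinf k) (TT K) (TT_inf K) (TT_const K)
        ((PowerSeries.C (RatFunc.X⁻¹ ^ m) : PowerSeries (RatFunc k)) • f) h3
      rw [← hq, ← Matrix.smul_vecMul] at h'
      have := congrFun (T_inj K h') l
      rw [Pi.smul_apply, smul_eq_mul] at this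
      rw [← this]; exact h l
  choose p hp using h
  exact ⟨p, by rw [Phi_eq, funext hp, hq]⟩

theorem coordsQ (g : G) {f : G → PowerSeries (RatFunc k)} (hf : NN (K.a g) (K.L g).Cm f) :
    ∃ q : G → QQ (K.a g), f = ∑ h, io (K.a g) (q h) • TT K h := by
  obtain ⟨q', h, h'⟩ := coordsN (K.L g).one_mod (TT_const K) (TT_NN K g) hf
  choose q hq using fun i => exists_io (h i)
  refine ⟨q, ?_⟩
  rw [← h']
  funext l
  simp [Matrix.vecMul, dotProduct, hq]

theorem T_inj' (g : G) {q q' : G → QQ (K.a g)} (h : ∑ h, io (K.a g) (q h) • TT K h = ∑ h, io (K.a g) (q' h) • TT K h) : q = q' := by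
  have := T_inj K (q := fun h => io (K.a g) (q h)) (q' := fun h => io (K.a g) (q' h)) (by
    funext l
    simpa [Matrix.vecMul, dotProduct] using congrFun h l)
  funext l
  exact io_inj _ (congrFun this l)

theorem Phi_trunc (g : G) (m : ℕ) {f : G → PowerSeries (RatFunc k)} (hf : NN (K.a g) (K.L g).Cm f) :
    ∃ p ν, NN (K.a g) (K.L g).Cm ν ∧ f = Phi K p + io (K.a g) (uQ (K.a g) ^ m) • ν := by
  obtain ⟨q, rfl⟩ := coordsQ K g hf
  choose p r h using fun i => exists_trunc (K.a g) m (q i)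
  refine ⟨p, ∑ h, io (K.a g) (r h) • TT K h, NN_sum _ _ fun h _ => NN_smul _ (TT_NN K g h), ?_⟩
  rw [Phi_eq' K (K.a g), Finset.smul_sum, ← Finset.sum_add_distrib]
  refine Finset.sum_congr rfl fun i _ => ?_
  rw [smul_smul, ← map_mul, ← add_smul, ← map_add, ← h]

theorem Phi_div (g : G) (m : ℕ) {p : G → (PowerSeries k)[X]} {ν : G → PowerSeries (RatFunc k)}
    (hν : NN (K.a g) (K.L g).Cm ν) (h : Phi K p = io (K.a g) (uQ (K.a g) ^ m) • ν) :
    ∃ ρ : G → (PowerSeries k)[X], ∀ l, p l = (X - C (PowerSeries.C (K.a g))) ^ m * ρ l := by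
  obtain ⟨q, rfl⟩ := coordsQ K g hν
  simp only [Phi_eq' K (K.a g), Finset.smul_sum, smul_smul, ← map_mul] at h
  have h2 := T_inj' K g h
  choose ρ h3 using fun l => exists_div (K.a g) m (p l) (q l) (congrFun h2 l)
  exact ⟨ρ, fun l => (h3 l).1⟩

theorem ell_zero (g : G) : (K.L g).ell 0 = 0 := by
  have := (K.L g).ell_smul 0 0 NN_zero
  simpa using this

theorem ell_sum (g : G) {ι : Type} (s : Finset ι) (f : ι → G → PowerSeries (RatFunc k))
    (h : ∀ i ∈ s, NN (K.a g) (K.L g).Cm (f i)) : (K.L g).ell (∑ i ∈ s, f i) = ∑ i ∈ s, (K.L g).ell (f i) := by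
  classical
  induction s using Finset.induction_on with
  | empty => simpa using ell_zero K g
  | insert b s hb ih =>
    have h' : ∀ i ∈ s, NN (K.a g) (K.L g).Cm (f i) := fun i hi => h i (Finset.mem_insert_of_mem hi)
    rw [Finset.sum_insert hb, Finset.sum_insert hb, (K.L g).ell_add _ _ (h _ (Finset.mem_insert_self _ _)) (NN_sum _ _ h'), ih h']

theorem ell_Phi (g s : G) (p : G → (PowerSeries k)[X]) : (K.L g).ell (fun l => Phi K p (s * l)) =
    ∑ h, (p h).eval (PowerSeries.C (K.a g)) * (K.L g).ell (TT K (s⁻¹ * h)) := by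
  have : (fun l => Phi K p (s * l)) = ∑ h, io (K.a g) (Jq (K.a g) (p h)) • TT K (s⁻¹ * h) := by
    funext l
    simp [Phi, io_Jq, TT_shift']
  rw [this, ell_sum K g _ _ fun h _ => NN_smul _ (TT_NN K g _)]
  refine Finset.sum_congr rfl fun h _ => ?_
  rw [(K.L g).ell_smul _ _ (TT_NN K g _), evW_Jq]

theorem ell_Phi' (g : G) (p : G → (PowerSeries k)[X]) : (K.L g).ell (Phi K p) =
    ∑ h, (p h).eval (PowerSeries.C (K.a g)) * (K.L g).ell (TT K h) := by
  simpa using ell_Phi K g 1 p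

theorem NN_mul (g : G) {f f' : G → PowerSeries (RatFunc k)} (h : NN (K.a g) (K.L g).Cm f) (h' : NN (K.a g) (K.L g).Cm f') :
    NN (K.a g) (K.L g).Cm (JJ (Dp K.a) • (f * f')) := by
  have := (K.L g).mul f f' h h'
  rwa [io_Jq] at this

theorem C_mem_PS {S : Subring (RatFunc k)} {f : RatFunc k} (h : f ∈ S) : PowerSeries.C f ∈ PS S := by
  rw [mem_PS]
  intro n
  rw [PowerSeries.coeff_C]
  split_ifs
  · exact h
  · exact zero_mem _

theorem X_mem_PS {S : Subring (RatFunc k)} : PowerSeries.X ∈ PS S := by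
  rw [mem_PS]
  intro n
  rw [PowerSeries.coeff_X]
  split_ifs
  · exact one_mem _
  · exact zero_mem _

omit [Group G] [DecidableEq G] in
theorem D_inf (a : G → k) : PowerSeries.C (RatFunc.X⁻¹ ^ Fintype.card G) * JJ (Dp a) ∈ PS (Oinf k) := by
  have h : PowerSeries.C (RatFunc.X⁻¹ ^ Fintype.card G : RatFunc k) = ∏ _j : G, PowerSeries.C (RatFunc.X⁻¹ : RatFunc k) := by
    rw [map_pow, Finset.prod_const, Finset.card_univ]
  rw [h, Dp, DD, map_prod, ← Finset.prod_mul_distrib]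
  refine prod_mem fun j _ => ?_
  rw [C_add, ← sub_sub, map_sub, JJ_sub, mul_sub, ← map_mul]
  refine sub_mem (C_mem_PS (uu_div_X_mem_Oinf _)) (mul_mem (C_mem_PS X_inv_mem_Oinf) ?_)
  have : JJ (C (PowerSeries.X : PowerSeries k)) = PowerSeries.X := by simp [JJ]
  rw [this]
  exact X_mem_PS

theorem exists_gamma [IsAlgClosed k] (h h' : G) : ∃ γ : G → (PowerSeries k)[X], Phi K γ = JJ (Dp K.a) • (TT K h * TT K h') := by
  refine Phi_surj K _ (fun g => NN_mul K g (TT_NN K g h) (TT_NN K g h')) ?_ (Fintype.card G) ?_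
  · intro c hc l
    exact mul_mem (JJ_mem c _) (mul_mem (TT_O K hc _ _) (TT_O K hc _ _))
  · intro l
    rw [Pi.smul_apply, smul_eq_mul, ← mul_assoc]
    exact mul_mem (D_inf _) (mul_mem (TT_inf K _ _) (TT_inf K _ _))

theorem exists_d [IsAlgClosed k] : ∃ d : G → (PowerSeries k)[X], Phi K d = 1 := by
  refine Phi_surj K _ (fun g => (K.L g).one) ?_ 0 ?_
  · intro c hc l
    exact one_mem _
  · intro l
    simp [one_mem]

end P12
end IGP

open Polynomial

namespace IGP

section P13
variable {k : Type} [Field k] {G : Type} [Group G] [Fintype G] [DecidableEq G] (K : GC k G)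

theorem Phi_smul (e : (PowerSeries k)[X]) (p : G → (PowerSeries k)[X]) : Phi K (fun l => e * p l) = JJ e • Phi K p := by
  funext m
  simp [Phi, Finset.mul_sum, mul_assoc]

theorem Phi_add (p p' : G → (PowerSeries k)[X]) : Phi K (fun l => p l + p' l) = Phi K p + Phi K p' := by
  funext m
  simp [Phi, add_mul, Finset.sum_add_distrib]

theorem Phi_sub (p p' : G → (PowerSeries k)[X]) : Phi K (fun l => p l - p' l) = Phi K p - Phi K p' := by
  funext m
  simp [Phi, sub_mul, Finset.sum_sub_distrib]

theorem Phi_sum {ι : Type} (s : Finset ι) (p : ι → G → (PowerSeries k)[X]) :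
    Phi K (fun l => ∑ i ∈ s, p i l) = ∑ i ∈ s, Phi K (p i) := by
  funext m
  simp only [Phi, map_sum, Finset.sum_mul, Finset.sum_apply]
  rw [Finset.sum_comm]

theorem Phi_ite (h : G) (e : (PowerSeries k)[X]) : Phi K (fun l => if h = l then e else 0) = JJ e • TT K h := by
  funext m
  simp [Phi, apply_ite JJ]

theorem Phi_shift (s : G) (p : G → (PowerSeries k)[X]) (m : G) : Phi K (fun l => p (s * l)) m = Phi K p (s * m) := by
  simp only [Phi]
  rw [← Equiv.sum_comp (Equiv.mulLeft s) (fun h => JJ (p h) * TT K h (s * m))]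
  simp [TT_shift]

variable {γ : G → G → G → (PowerSeries k)[X]} (hγ : ∀ h h', Phi K (γ h h') = JJ (Dp K.a) • (TT K h * TT K h'))
  {d : G → (PowerSeries k)[X]} (hd : Phi K d = 1)

include hγ

theorem Phi_mul1 (p : G → (PowerSeries k)[X]) (h' : G) :
    Phi K (fun l => ∑ h, p h * γ h h' l) = JJ (Dp K.a) • (Phi K p * TT K h') := by
  rw [Phi_sum]
  simp only [Phi_smul, hγ]
  funext m
  simp only [Finset.sum_apply, Pi.smul_apply, smul_eq_mul, Pi.mul_apply, Phi, Finset.sum_mul, Finset.mul_sum]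
  exact Finset.sum_congr rfl fun h _ => by ring

theorem Phi_mul (p p' : G → (PowerSeries k)[X]) :
    Phi K (fun l => ∑ h, ∑ h', p h * p' h' * γ h h' l) = JJ (Dp K.a) • (Phi K p * Phi K p') := by
  rw [Phi_sum]
  simp only [Phi_sum, Phi_smul, hγ]
  funext m
  simp only [Finset.sum_apply, Pi.smul_apply, smul_eq_mul, Pi.mul_apply, Phi, map_mul]
  rw [Finset.sum_mul_sum, Finset.mul_sum]
  simp only [Finset.mul_sum]
  exact Finset.sum_congr rfl fun h _ => Finset.sum_congr rfl fun h' _ => by ring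

theorem g_comm (h h' l : G) : γ h h' l = γ h' h l := by
  refine congrFun (Phi_inj K ?_) l
  rw [hγ, hγ, mul_comm]

theorem g_assoc (h h' h'' m : G) : ∑ l, γ h h' l * γ l h'' m = ∑ l, γ h' h'' l * γ h l m := by
  simp only [g_comm K hγ h]
  refine congrFun (Phi_inj K (p := fun m => ∑ l, γ h' h l * γ l h'' m) (p' := fun m => ∑ l, γ h' h'' l * γ l h m) ?_) m
  rw [Phi_mul1 K hγ, Phi_mul1 K hγ, hγ, hγ]
  funext m
  simp only [Pi.smul_apply, smul_eq_mul, Pi.mul_apply]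
  ring

theorem g_equiv (s h h' l : G) : γ (s * h) (s * h') (s * l) = γ h h' l := by
  refine congrFun (Phi_inj K (p := fun l => γ (s * h) (s * h') (s * l)) (p' := γ h h') ?_) l
  funext m
  rw [Phi_shift, hγ, hγ]
  simp only [Pi.smul_apply, smul_eq_mul, Pi.mul_apply, TT_shift]

theorem g_lam_mul (g h h' : G) : ∑ l, (γ h h' l).eval (PowerSeries.C (K.a g)) * (K.L g).ell (TT K l) =
    (Dp K.a).eval (PowerSeries.C (K.a g)) * (K.L g).ell (TT K h) * (K.L g).ell (TT K h') := by
  rw [← ell_Phi', hγ, ← io_Jq (K.a g), (K.L g).ell_mul _ _ (TT_NN K g h) (TT_NN K g h'), evW_Jq]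

include hd

theorem g_one (h' l : G) : ∑ h, d h * γ h h' l = if h' = l then Dp K.a else 0 := by
  refine congrFun (Phi_inj K (p := fun l => ∑ h, d h * γ h h' l) (p' := fun l => if h' = l then Dp K.a else 0) ?_) l
  rw [Phi_mul1 K hγ, Phi_ite, hd, one_mul]

omit hγ in
theorem g_lam_one (g : G) : ∑ h, (d h).eval (PowerSeries.C (K.a g)) * (K.L g).ell (TT K h) = 1 := by
  rw [← ell_Phi', hd, (K.L g).ell_one]

omit hd hγ in
theorem g_lam_inv (g h : G) : (K.L g).ell (TT K (g * h)) = (K.L g).ell (TT K h) := by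
  rw [← (K.L g).ell_g _ (TT_NN K g h)]
  congr 1
  funext l
  rw [TT_shift', inv_inv]

omit hγ in
theorem exists_z (g : G) : ∃ z ν, NN (K.a g) (K.L g).Cm ν ∧ (K.L g).Z = Phi K z + io (K.a g) (uQ (K.a g) ^ 2) • ν ∧
    (g = 1 → ∀ l, z l = (X - C (PowerSeries.C (K.a g))) * d l) := by
  by_cases hg : g = 1
  · refine ⟨fun l => (X - C (PowerSeries.C (K.a g))) * d l, 0, NN_zero, ?_, fun _ _ => rfl⟩
    rw [(K.L g).Z1 hg, Phi_smul, hd, ← io_Jq (K.a g), Jq_sub, smul_zero, add_zero]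
  · obtain ⟨z, ν, h1, h2⟩ := Phi_trunc K g 2 (K.L g).NZ
    exact ⟨z, ν, h1, h2, fun h => absurd h hg⟩

theorem exists_zz (g : G) {z ν} (hν : NN (K.a g) (K.L g).Cm ν)
    (hZ : (K.L g).Z = Phi K z + io (K.a g) (uQ (K.a g) ^ 2) • ν) :
    ∃ z' ρ : G → (PowerSeries k)[X], ∀ l, ∑ h, ∑ h', z h * z' h' * γ h h' l =
      Dp K.a * (X - C (PowerSeries.C (K.a g))) * d l + (X - C (PowerSeries.C (K.a g))) ^ 2 * ρ l := by
  obtain ⟨z', ν', hν', hZ'⟩ := Phi_trunc K g 2 (K.L g).NZ'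
  obtain ⟨ρ, hρ⟩ := Phi_div K g 2
    (p := fun l => (∑ h, ∑ h', z h * z' h' * γ h h' l) - (Dp K.a * (X - C (PowerSeries.C (K.a g)))) * d l)
    (ν := io (K.a g) (uQ (K.a g) ^ 2) • (JJ (Dp K.a) • (ν * ν')) + io (K.a g) (-1) • (JJ (Dp K.a) • ((K.L g).Z * ν'))
      + io (K.a g) (-1) • (JJ (Dp K.a) • (ν * (K.L g).Z')))
    (NN_add (NN_add (NN_smul _ (NN_mul K g hν hν')) (NN_smul _ (NN_mul K g (K.L g).NZ hν'))) (NN_smul _ (NN_mul K g hν (K.L g).NZ'))) (by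
      rw [Phi_sub, Phi_mul K hγ, Phi_smul, hd, map_mul, ← io_Jq (K.a g) (X - _), Jq_sub]
      funext l
      have e1 := congrFun hZ l
      have e2 := congrFun hZ' l
      have e3 := congrFun (K.L g).ZZ' l
      simp only [Pi.smul_apply, smul_eq_mul, Pi.mul_apply, Pi.add_apply, Pi.sub_apply, Pi.one_apply, map_pow, map_neg, map_one] at e1 e2 e3 ⊢
      have e1' := eq_sub_of_add_eq e1.symm
      have e2' := eq_sub_of_add_eq e2.symm
      rw [e1', e2']
      linear_combination JJ (Dp K.a) * e3)
  exact ⟨z', ρ, fun l => by rw [← hρ l]; ring⟩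

omit hγ hd in
theorem g_lz (g p : G) {z ν} (hν : NN (K.a g) (K.L g).Cm ν)
    (hZ : (K.L g).Z = Phi K z + io (K.a g) (uQ (K.a g) ^ 2) • ν) :
    ∑ h, (z h).eval (PowerSeries.C (K.a g)) * (K.L g).ell (TT K (p⁻¹ * h)) = 0 := by
  have h1 := (K.L g).ellZ p
  rw [← ell_Phi]
  have h2 : (fun l => (K.L g).Z (p * l)) = (fun l => Phi K z (p * l)) + io (K.a g) (uQ (K.a g) ^ 2) • (fun l => ν (p * l)) := by
    funext l
    rw [hZ]; rfl
  have h3 := NN_shift (K.L g).equi p hν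
  rw [h2, (K.L g).ell_add _ _ (NN_shift (K.L g).equi p (Phi_NN K g z)) (NN_smul _ h3), (K.L g).ell_smul _ _ h3] at h1
  simpa using h1

omit hd in
theorem g_znil (g : G) {z ν} (hν : NN (K.a g) (K.L g).Cm ν)
    (hZ : (K.L g).Z = Phi K z + io (K.a g) (uQ (K.a g) ^ 2) • ν) :
    (Matrix.of fun h' l => ∑ h, (z h).eval (PowerSeries.C (K.a g)) * (γ h h' l).eval (PowerSeries.C (K.a g))) ^ (Fintype.card G) = 0 := by
  refine pow_eq_zero_of_le (orderOf_le_card_univ (x := g)) ?_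
  choose R hR using fun h => coordsQ K g (NN_mul K g hν (TT_NN K g h))
  let Mq : Matrix G G (QQ (K.a g)) := Matrix.of fun h' l => Jq (K.a g) (∑ h, z h * γ h h' l) + uQ (K.a g) ^ 2 * R h' l
  have hM : (Matrix.of fun h' l => ∑ h, (z h).eval (PowerSeries.C (K.a g)) * (γ h h' l).eval (PowerSeries.C (K.a g))) =
      (evW (K.a g)).mapMatrix Mq := by
    ext h' l : 2
    simp only [Mq, RingHom.mapMatrix_apply, Matrix.map_apply, Matrix.of_apply, map_add, map_mul, map_pow, evW_uQ, evW_Jq]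
    simp [eval_finsetSum]
  obtain ⟨q, hq⟩ := (K.L g).Znil
  have h1 : (io (K.a g)).mapMatrix Mq * TT K = TT K * Matrix.diagonal (fun l => JJ (Dp K.a) * (K.L g).Z l) := by
    refine Matrix.ext fun h' m => ?_
    rw [Matrix.mul_diagonal, Matrix.mul_apply]
    have e1 := congrFun (Phi_mul1 K hγ z h') m
    have e2 := congrFun (hR h') m
    have e3 := congrFun hZ m
    simp only [Finset.sum_apply, Pi.smul_apply, smul_eq_mul, Pi.mul_apply, Pi.add_apply] at e1 e2 e3
    simp only [Mq, RingHom.mapMatrix_apply, Matrix.map_apply, Matrix.of_apply, map_add, add_mul, Finset.sum_add_distrib, io_Jq]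
    rw [show (∑ l, JJ (∑ h, z h * γ h h' l) * TT K l m) = Phi K (fun l => ∑ h, z h * γ h h' l) m from rfl, e1]
    simp only [map_mul (io (K.a g)), mul_assoc, ← Finset.mul_sum]
    rw [← e2, e3]
    ring
  have h2 : ∀ n, (io (K.a g)).mapMatrix (Mq ^ n) * TT K = TT K * Matrix.diagonal (fun l => (JJ (Dp K.a) * (K.L g).Z l) ^ n) := by
    intro n
    induction n with
    | zero => simp
    | succ n ih =>
      rw [pow_succ, map_mul, mul_assoc, h1, ← mul_assoc, ih, mul_assoc, Matrix.diagonal_mul_diagonal]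
      simp only [pow_succ]
  have h3 := h2 (orderOf g)
  simp only [← io_Jq (K.a g) (Dp K.a), hq] at h3
  have h4 : Mq ^ orderOf g = (uQ (K.a g) * q) • 1 := by
    have h5 : (io (K.a g)).mapMatrix (Mq ^ orderOf g) * TT K = (io (K.a g)).mapMatrix ((uQ (K.a g) * q) • 1) * TT K := by
      rw [h3]
      ext i j : 2
      rw [Matrix.mul_diagonal, Matrix.mul_apply]
      simp [Matrix.map_apply, Matrix.smul_apply, Matrix.one_apply, apply_ite (io (K.a g)), mul_comm]
    obtain ⟨U, hU⟩ := isUnit_mat (TT K) (TT_const K)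
    rw [← hU, Units.mul_left_inj] at h5
    exact Matrix.map_injective (io_inj _) h5
  rw [hM, ← map_pow, h4]
  ext i j : 2
  simp [Matrix.map_apply]

omit hd in
theorem exists_dec' (g : G) {z ν} (hν : NN (K.a g) (K.L g).Cm ν)
    (hZ : (K.L g).Z = Phi K z + io (K.a g) (uQ (K.a g) ^ 2) • ν) :
    ∃ (i : G → G → (PowerSeries k)[X]) (r : G → G → (PowerSeries k)[X]) (ρ : G → G → (PowerSeries k)[X]),
      ∀ h l, (if h = l then Dp K.a else 0) = Dp K.a * (∑ p, C ((K.L g).ell (TT K (p⁻¹ * h))) * i p l) +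
      (∑ h₁, ∑ h', z h₁ * r h h' * γ h₁ h' l) + (X - C (PowerSeries.C (K.a g))) * ρ h l := by
  choose i ι hι hi using fun p => Phi_trunc K g 1 ((K.L g).NI p)
  choose r' s hr' hs hdec using fun h => (K.L g).dec _ (TT_NN K g h)
  choose r τ hτ hr using fun h => Phi_trunc K g 1 (hr' h)
  have hD : ∀ {f}, NN (K.a g) (K.L g).Cm f → NN (K.a g) (K.L g).Cm (JJ (Dp K.a) • f) := by
    intro f hf
    rw [← io_Jq (K.a g)]
    exact NN_smul _ hf
  have hL : ∀ (w : PowerSeries k) {f : G → PowerSeries (RatFunc k)}, NN (K.a g) (K.L g).Cm f → NN (K.a g) (K.L g).Cm (Lam w • f) := by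
    intro w f hf
    rw [Lam_eq (K.a g)]
    exact NN_smul _ hf
  have key : ∀ h, ∃ ρ : G → (PowerSeries k)[X], ∀ l, (if h = l then Dp K.a else 0)
      - (Dp K.a * (∑ p, C ((K.L g).ell (TT K (p⁻¹ * h))) * i p l) + (∑ h₁, ∑ h', z h₁ * r h h' * γ h₁ h' l)) =
        (X - C (PowerSeries.C (K.a g))) ^ 1 * ρ l := by
    intro h
    refine Phi_div K g 1 (ν := JJ (Dp K.a) • (∑ p, Lam ((K.L g).ell (TT K (p⁻¹ * h))) • ι p) + JJ (Dp K.a) • (Phi K z * τ h)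
      + io (K.a g) (uQ (K.a g)) • (JJ (Dp K.a) • (ν * r' h)) + JJ (Dp K.a) • s h) ?_ ?_
    · exact NN_add (NN_add (NN_add (hD (NN_sum _ _ fun p _ => hL _ (hι p))) (NN_mul K g (Phi_NN K g z) (hτ h)))
        (NN_smul _ (NN_mul K g hν (hr' h)))) (hD (hs h))
    · have hT : ∀ p, (fun l => TT K h (p * l)) = TT K (p⁻¹ * h) := fun p => funext fun l => TT_shift' K p h l
      rw [Phi_sub, Phi_add, Phi_ite, Phi_mul K hγ, Phi_smul, Phi_sum]
      simp only [Phi_smul]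
      have e0 := hdec h
      simp only [hT] at e0
      have hJ : ∀ w : PowerSeries k, JJ (C w) = Lam w := fun w => rfl
      simp only [hJ]
      have e4 : (∑ p, Lam ((K.L g).ell (TT K (p⁻¹ * h))) • (K.L g).I p) =
          (∑ p, Lam ((K.L g).ell (TT K (p⁻¹ * h))) • Phi K (i p)) +
          io (K.a g) (uQ (K.a g)) • (∑ p, Lam ((K.L g).ell (TT K (p⁻¹ * h))) • ι p) := by
        rw [Finset.smul_sum, ← Finset.sum_add_distrib]
        refine Finset.sum_congr rfl fun p _ => ?_
        rw [smul_comm, ← smul_add]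
        congr 1
        rw [hi p, pow_one]
      rw [e4] at e0
      generalize (∑ p, Lam ((K.L g).ell (TT K (p⁻¹ * h))) • Phi K (i p)) = S1 at *
      generalize (∑ p, Lam ((K.L g).ell (TT K (p⁻¹ * h))) • ι p) = S2 at *
      funext l
      have e1 := congrFun hZ l
      have e2 := congrFun (hr h) l
      have e3 := congrFun e0 l
      simp only [Pi.smul_apply, smul_eq_mul, Pi.mul_apply, Pi.add_apply, Pi.sub_apply, map_pow, pow_one] at e1 e2 e3 ⊢
      linear_combination JJ (Dp K.a) * e3 + JJ (Dp K.a) * r' h l * e1 + JJ (Dp K.a) * Phi K z l * e2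
  choose ρ hρ using key
  exact ⟨i, r, ρ, fun h l => by linear_combination hρ h l⟩

omit hγ hd in
theorem exists_valid [IsAlgClosed k] : ∃ c : CData G (PowerSeries k),
    c.Valid PowerSeries.X (fun g => PowerSeries.C (K.a g)) (Fintype.card G) := by
  choose γ hγ using exists_gamma K
  obtain ⟨d, hd⟩ := exists_d K
  choose z ν hν hZ hz1 using exists_z K hd
  choose z' ρ1 hzz using fun g => exists_zz K hγ hd g (hν g) (hZ g)
  choose i r ρ2 hdec using fun g => exists_dec' K hγ g (hν g) (hZ g)
  refine ⟨⟨γ, d, fun g h => (K.L g).ell (TT K h), z, z', i, r, ρ1, ρ2⟩, ?_⟩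
  exact
    { comm := g_comm K hγ
      assoc := g_assoc K hγ
      one := g_one K hγ hd
      equiv := g_equiv K hγ
      lam_inv := g_lam_inv K
      lam_mul := g_lam_mul K hγ
      lam_one := g_lam_one K hd
      zz := hzz
      lz := fun g p => g_lz K g p (hν g) (hZ g)
      znil := fun g => g_znil K hγ g (hν g) (hZ g)
      dec := hdec
      z1 := hz1 1 rfl }

end P13
end IGP

/-- Every finite group occurs as the Galois group of a finite Galois extension of
`ℚ̄(t)`, where `ℚ̄` is the algebraic closure of `ℚ`. -/
theorem finite_group_occurs_as_galoisGroup_over_algClosure_ratFunc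
    (G : Type) [Group G] [Finite G] :
    ∃ (N : Type) (_ : Field N) (_ : Algebra (RatFunc (AlgebraicClosure ℚ)) N),
      FiniteDimensional (RatFunc (AlgebraicClosure ℚ)) N ∧
        IsGalois (RatFunc (AlgebraicClosure ℚ)) N ∧
          Nonempty ((N ≃ₐ[RatFunc (AlgebraicClosure ℚ)] N) ≃* G) := by
  classical
  have : Fintype G := Fintype.ofFinite G
  obtain ⟨a, ha⟩ : ∃ a : G → AlgebraicClosure ℚ, Function.Injective a :=
    ⟨_, ((Function.Embedding.nonempty_of_card_le (α := G)
      (β := Fin (Fintype.card G)) (by simp)).some.trans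
      (Fin.valEmbedding.trans (Infinite.natEmbedding (AlgebraicClosure ℚ)))).injective⟩
  obtain ⟨K, _⟩ := IGP.exists_GC a ha
  obtain ⟨c, V⟩ := IGP.exists_valid K
  exact IGP.conclude_W V
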